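/- arXiv:1512.08539 — 8 statements merged into one kernel-verified Lean document; each statement's English description precedes it below -/
import Mathlib

section
/- Let B be a transitive H-G-biset. Let K' be a group with homomorphisms ψ' : K' → H and φ' : K' → G, and suppose β : (H × G)/∼ → B is a bijection, where ∼ is the equivalence relation on H × G generated by (h,g) ∼ (ψ'(k)·h, φ'(k)·g) for k ∈ K', and β satisfies β([(h·a⁻¹, g·c)]) = a·β([(h,g)])·c for all a, h ∈ H and c, g ∈ G. Set b = β([(1,1)]) and K = {(h,g) ∈ H × G | b·g = h·b}, with coordinate-projection homomorphisms ψ : K → H and φ : K → G. Then there exists a group homomorphism τ : K' → K with ψ∘τ = ψ' and φ∘τ = φ'. -/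
/-!
Write `b = β [(1, 1)]`. The set `K` is closed under products because the two actions commute:
`b·(gg') = (h·b)·g' = h·(b·g') = (hh')·b`. For `k : K'`, equivariance of `β` gives
`b·φ'(k) = β [(1, φ'(k))]` and `ψ'(k)·b = β [(ψ'(k)⁻¹, 1)]`, and multiplication by `k` identifies
these two classes. Hence `(ψ'(k), φ'(k)) ∈ K`, and `τ` is the codomain restriction of
`ψ'.prod φ'` to `K`.
-/

/-- Universality of the minimal group `K` decomposing a transitive biset.
Let `B` be a transitive `H`-`G`-biset. Suppose `K'` is a group with homomorphisms
`ψ' : K' → H`, `φ' : K' → G`, and `β` is a bijection from the quotient of `H × G` by the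
equivalence relation generated by `(h,g) ∼ (ψ'(k)h, φ'(k)g)` onto `B`, satisfying
`β([(h·a⁻¹, g·c)]) = a·β([(h,g)])·c`.  Set `b = β([(1,1)])` and let
`K = {(h,g) | b·g = h·b}` (a subgroup of `H × G`), with `ψ, φ` the coordinate
projections.  Then there is a homomorphism `τ : K' → K` with `ψ∘τ = ψ'` and `φ∘τ = φ'`. -/
theorem transitive_biset_minimal_group {H G B K' : Type*} [Group H] [Group G] [Group K']
    (l : H → B → B) (r : B → G → B)
    (hl_one : ∀ x, l 1 x = x)
    (hl_mul : ∀ h h' x, l (h * h') x = l h (l h' x))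
    (hr_one : ∀ x, r x 1 = x)
    (hr_mul : ∀ x g g', r x (g * g') = r (r x g) g')
    (hcomm : ∀ h x g, r (l h x) g = l h (r x g))
    (htrans : ∀ x y : B, ∃ (h : H) (g : G), l h (r x g) = y)
    (ψ' : K' →* H) (φ' : K' →* G)
    (β : Quot (fun p q : H × G => ∃ k : K', q = (ψ' k * p.1, φ' k * p.2)) ≃ B)
    (hβ : ∀ (a h : H) (c g : G),
      β (Quot.mk _ (h * a⁻¹, g * c)) = r (l a (β (Quot.mk _ (h, g)))) c) :
    ∃ K : Subgroup (H × G),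
      (↑K = {p : H × G |
        r (β (Quot.mk _ ((1 : H), (1 : G)))) p.2 =
          l p.1 (β (Quot.mk _ ((1 : H), (1 : G))))}) ∧
      ∃ τ : K' →* K, ∀ k : K',
        ((τ k : H × G).1 = ψ' k ∧ (τ k : H × G).2 = φ' k) := by
  have hK : ∀ k : K', r (β (Quot.mk _ ((1 : H), (1 : G)))) (φ' k) =
      l (ψ' k) (β (Quot.mk _ ((1 : H), (1 : G)))) := by
    intro k
    have h1 := hβ 1 1 (φ' k) 1
    have h2 := hβ (ψ' k) 1 1 1
    rw [hl_one] at h1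
    rw [hr_one] at h2
    rw [← h1, ← h2]
    exact congrArg β (Quot.sound ⟨k, by simp⟩).symm
  generalize β (Quot.mk _ ((1 : H), (1 : G))) = b at hK ⊢
  let K : Subgroup (H × G) :=
    { carrier := {p | r b p.2 = l p.1 b}
      one_mem' := by simp [hl_one, hr_one]
      mul_mem' := by
        intro p q hp hq
        simp only [Set.mem_ofPred_eq] at hp hq
        simp only [Set.mem_ofPred_eq, Prod.fst_mul, Prod.snd_mul]
        rw [hr_mul, hp, hcomm, hq, hl_mul]
      inv_mem' := by
        intro p hp
        simp only [Set.mem_ofPred_eq] at hp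
        simp only [Set.mem_ofPred_eq, Prod.fst_inv, Prod.snd_inv]
        -- Both sides equal `p.1⁻¹·(b·p.2)·p.2⁻¹`.
        calc r b p.2⁻¹ = r (l p.1⁻¹ (l p.1 b)) p.2⁻¹ := by
              rw [← hl_mul, inv_mul_cancel, hl_one]
          _ = l p.1⁻¹ b := by
              rw [← hp, hcomm, ← hr_mul, mul_inv_cancel, hr_one] }
  exact ⟨K, rfl, (ψ'.prod φ').codRestrict K hK, fun k => ⟨rfl, rfl⟩⟩
end

section
/- Let B be a transitive H-G-biset whose left H-action is free, and fix b ∈ B. Then: (i) G_b = {g ∈ G | b·g ∈ H·b} is a subgroup of G; (ii) H acts simply transitively on the orbit H·b (for every c ∈ H·b there is a unique h ∈ H with c = h·b); (iii) H·b is closed under the right action of G_b; and (iv) the map (H·b) × G → B sending (c,g) to c·g is surjective, and for c, c' ∈ H·b and g, g' ∈ G one has c·g = c'·g' if and only if there exists k ∈ G_b with c' = c·k and g' = k⁻¹·g. -/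
/-! The set `G_b` is a subgroup because the two actions commute: if `b·g = h·b` and
`b·g' = h'·b`, then `b·(g g') = (h h')·b` and `b·g⁻¹ = h⁻¹·b`. Freeness gives simple transitivity
on `H·b`, and transitivity gives surjectivity of `(c, g) ↦ c·g`. If `c·g = c'·g'`, then
`k = g g'⁻¹` satisfies `c·k = c'`; writing `c = h·b`, `c' = h'·b` and cancelling `h` shows
`b·k = (h⁻¹ h')·b`, so `k ∈ G_b`. -/

/-- Let `B` be a transitive `H`-`G`-biset whose left `H`-action is free,
and fix `b ∈ B`.  Then (i) `G_b = {g | b·g ∈ H·b}` is a subgroup of `G`; (ii) `H` acts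
simply transitively on the orbit `H·b`; (iii) `H·b` is closed under the right action of
`G_b`; (iv) the map `(H·b) × G → B`, `(c,g) ↦ c·g` is surjective, and `c·g = c'·g'` iff
`c' = c·k` and `g' = k⁻¹g` for some `k ∈ G_b`. -/
theorem leftfree_transitive_biset_decomposition {H G B : Type*} [Group H] [Group G]
    (l : H → B → B) (r : B → G → B)
    (hl_one : ∀ x, l 1 x = x)
    (hl_mul : ∀ h h' x, l (h * h') x = l h (l h' x))
    (hr_one : ∀ x, r x 1 = x)
    (hr_mul : ∀ x g g', r x (g * g') = r (r x g) g')
    (hcomm : ∀ h x g, r (l h x) g = l h (r x g))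
    (htrans : ∀ x y : B, ∃ (h : H) (g : G), l h (r x g) = y)
    (hfree : ∀ (h : H) (x : B), l h x = x → h = 1)
    (b : B) :
    ∃ Gb : Subgroup G,
      (↑Gb = {g : G | ∃ h : H, r b g = l h b}) ∧
      (∀ c : B, (∃ h : H, c = l h b) → ∃! h : H, c = l h b) ∧
      (∀ c : B, (∃ h : H, c = l h b) → ∀ g ∈ Gb, ∃ h : H, r c g = l h b) ∧
      (∀ x : B, ∃ (c : B) (h : H) (g : G), c = l h b ∧ r c g = x) ∧
      (∀ (c c' : B) (g g' : G), (∃ h : H, c = l h b) → (∃ h : H, c' = l h b) →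
        (r c g = r c' g' ↔ ∃ k ∈ Gb, c' = r c k ∧ g' = k⁻¹ * g)) := by
  have l_cancel : ∀ (h : H) (x y : B), l h x = y → x = l h⁻¹ y := by
    rintro h x _ rfl
    rw [← hl_mul, inv_mul_cancel, hl_one]
  have r_cancel : ∀ (g : G) (x : B), r (r x g) g⁻¹ = x := by
    intro g x
    rw [← hr_mul, mul_inv_cancel, hr_one]
  let Gb : Subgroup G :=
    { carrier := {g : G | ∃ h : H, r b g = l h b}
      one_mem' := ⟨1, by rw [hr_one, hl_one]⟩
      mul_mem' := by
        rintro g g' ⟨h, hh⟩ ⟨h', hh'⟩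
        exact ⟨h * h', by rw [hr_mul, hh, hcomm, hh', hl_mul]⟩
      inv_mem' := by
        rintro g ⟨h, hh⟩
        exact ⟨h⁻¹, l_cancel h _ _ (by rw [← hcomm, ← hh, r_cancel])⟩ }
  refine ⟨Gb, rfl, ?_, ?_, ?_, ?_⟩
  · rintro _ ⟨h, rfl⟩
    refine ⟨h, rfl, fun h' hh' => ?_⟩
    -- `h⁻¹ * h'` fixes `b`, hence is trivial by freeness.
    have hfix : l (h⁻¹ * h') b = b := by
      rw [hl_mul]
      exact (l_cancel h b _ hh').symm
    exact (inv_mul_eq_one.mp (hfree _ _ hfix)).symm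
  · rintro _ ⟨h, rfl⟩ g ⟨k, hk⟩
    exact ⟨h * k, by rw [hcomm, hk, hl_mul]⟩
  · intro x
    obtain ⟨h, g, hx⟩ := htrans b x
    exact ⟨l h b, h, g, rfl, by rw [hcomm, hx]⟩
  · rintro c c' g g' ⟨h, hc⟩ ⟨h', hc'⟩
    constructor
    · intro heq
      -- The second condition on `k` forces `k = g * g'⁻¹`.
      have hk : r c (g * g'⁻¹) = c' := by rw [hr_mul, heq, r_cancel]
      refine ⟨g * g'⁻¹, ⟨h⁻¹ * h', ?_⟩, hk.symm, by group⟩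
      rw [hl_mul]
      exact l_cancel h _ _ (by rw [← hcomm, ← hc, hk, hc'])
    · rintro ⟨k, -, rfl, rfl⟩
      rw [← hr_mul, mul_inv_cancel_left]
end

section
/- Let f : Z → X be a fibration between path-connected topological spaces, with basepoints † ∈ Z and * ∈ X. Then the assignment β ↦ [f∘β] induces a bijection from the set {paths β in Z with β(0) = † and f(β(1)) = *} modulo the relation ∼ onto B(f,†,*), where β ∼ β' if and only if there exists a path ε in Z with image contained in f⁻¹(*), ε(0) = β(1), ε(1) = β'(1), such that β#ε is homotopic to β' rel endpoints. In particular, every class in B(f,†,*) is of the form [f∘β] for such a β, and [f∘β] = [f∘β'] if and only if β ∼ β'. -/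
/-!
Surjectivity is path lifting: a path in `X` starting at `f †` lifts to a path starting at `†`.

For the relation, suppose `[f∘β] = [f∘β']`, and put `α = β⁻¹#β'`, a path from `β(1)` to `β'(1)`.
Then `f∘α` is a null-homotopic loop at `*`. Lift a null-homotopy of it to a square in `Z` whose
bottom side is `α`. The null-homotopy is rel endpoints and ends at a constant path, so the other
three sides of the lifted square lie in `f⁻¹(*)`; traversed in order they form a vertical path `ε`
homotopic to `α` (`exists_vertical_path`). Hence `β#ε ≃ β#β⁻¹#β' ≃ β'`. Only plain homotopy
lifting is used, without any relative version.

Conversely, `f∘ε` is constant for a vertical `ε`, so `f∘β ≃ f∘(β#ε) ≃ f∘β'`.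
-/

universe u

/-- A continuous map is a (Hurewicz) fibration if it has the homotopy lifting property
with respect to all topological spaces. -/
def IsFibration {Z X : Type*} [TopologicalSpace Z] [TopologicalSpace X]
    (f : Z → X) : Prop :=
  ∀ (W : Type u) [TopologicalSpace W] (H : C(W × unitInterval, X)) (h₀ : C(W, Z)),
    (∀ w : W, f (h₀ w) = H (w, 0)) →
    ∃ H' : C(W × unitInterval, Z),
      (∀ w : W, H' (w, 0) = h₀ w) ∧ ∀ p : W × unitInterval, f (H' p) = H p

/-- The homotopy class of a path, as an element of `Path.Homotopic.Quotient`. -/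
def pQ {X : Type*} [TopologicalSpace X] {x y : X} (γ : Path x y) :
    Path.Homotopic.Quotient x y :=
  Quotient.mk (Path.Homotopic.setoid x y) γ

open unitInterval

/-- A fibration lifts homotopies between paths. The `ULift` places the unit interval in the universe
over which `IsFibration` quantifies. -/
lemma IsFibration.lift_square {Z X : Type*} [TopologicalSpace Z] [TopologicalSpace X]
    {f : Z → X} (hf : IsFibration.{u} f) (H : C(I × I, X)) (h₀ : C(I, Z))
    (h : ∀ s, f (h₀ s) = H (s, 0)) :
    ∃ K : C(I × I, Z), (∀ s, K (s, 0) = h₀ s) ∧ ∀ p, f (K p) = H p := by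
  obtain ⟨K, hK₀, hK⟩ := hf (ULift.{u} I)
    ⟨fun p => H (p.1.down, p.2), by fun_prop⟩ ⟨fun w => h₀ w.down, by fun_prop⟩
    (fun w => h w.down)
  exact ⟨⟨fun p => K (ULift.up p.1, p.2), by fun_prop⟩,
    fun s => hK₀ (ULift.up s), fun p => hK (ULift.up p.1, p.2)⟩

/-- Path lifting, obtained by lifting the homotopy `(s, t) ↦ γ t`. -/
lemma IsFibration.lift_path {Z X : Type*} [TopologicalSpace Z] [TopologicalSpace X]
    {f : Z → X} (hf : IsFibration.{u} f) {z : Z} {x : X} (γ : Path (f z) x) :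
    ∃ (z' : Z) (β : Path z z'), ∀ t, f (β t) = γ t := by
  obtain ⟨K, hK₀, hK⟩ := hf.lift_square ⟨fun p => γ p.2, by fun_prop⟩ (.const I z)
    (fun s => by simp)
  exact ⟨K (0, 1), ⟨⟨fun t => K (0, t), by fun_prop⟩, hK₀ 0, rfl⟩, fun t => hK (0, t)⟩

/-- If `f∘α` is a loop at `x` that contracts rel endpoints, through `H`, to the constant loop, then
`α` is homotopic to a path in the fibre over `x`. -/
lemma IsFibration.exists_vertical_path {Z X : Type*} [TopologicalSpace Z] [TopologicalSpace X]
    {f : Z → X} (hf : IsFibration.{u} f) {z z' : Z} {x : X} (α : Path z z')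
    (H : C(I × I, X)) (hα : ∀ s, f (α s) = H (s, 0)) (hleft : ∀ t, H (0, t) = x)
    (htop : ∀ s, H (s, 1) = x) (hright : ∀ t, H (1, t) = x) :
    ∃ ε : Path z z', (∀ t, f (ε t) = x) ∧ ε.Homotopic α := by
  -- Making `z` and `z'` definitionally `a 0` and `a 1` avoids casts of paths below.
  obtain ⟨a, rfl, rfl⟩ := α
  obtain ⟨K, hK₀, hK⟩ := hf.lift_square H a hα
  let g : C(I, Z) := ⟨fun s => K (s, 1), by fun_prop⟩
  let F : a.Homotopy g :=
    { toFun := fun p => K (p.2, p.1)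
      continuous_toFun := by fun_prop
      map_zero_left := hK₀
      map_one_left := fun _ => rfl }
  let top : Path (g 0) (g 1) := Path.id.map g.continuous
  refine ⟨((F.evalAt 0).trans top).trans (F.evalAt 1).symm, fun t => ?_, ?_⟩
  · have hL : ∀ t, f (F.evalAt 0 t) = x := fun t => (hK (0, t)).trans (hleft t)
    have hT : ∀ t, f (top t) = x := fun t => (hK (t, 1)).trans (htop t)
    have hR : ∀ t, f ((F.evalAt 1).symm t) = x := fun t => (hK (1, σ t)).trans (hright _)
    have hLT : ∀ t, f ((F.evalAt 0).trans top t) = x := fun t => by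
      rw [Path.trans_apply]
      split_ifs
      exacts [hL _, hT _]
    rw [Path.trans_apply]
    split_ifs
    exacts [hLT _, hR _]
  · have hsq := Path.Homotopic.map_trans_evalAt F Path.id
    rw [← Path.Homotopic.Quotient.eq] at hsq ⊢
    have ha : Path.id.map a.continuous = (⟨a, rfl, rfl⟩ : Path (a 0) (a 1)) := rfl
    rw [← ha]
    simp only [Path.Homotopic.Quotient.mk_trans, Path.Homotopic.Quotient.mk_symm] at hsq ⊢
    rw [← hsq, Path.Homotopic.Quotient.trans_assoc, Path.Homotopic.Quotient.trans_symm,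
      Path.Homotopic.Quotient.trans_refl]

/-- If `f : Z → X` is a fibration between path-connected spaces with
basepoints `† ∈ Z`, `* ∈ X`, then `β ↦ [f∘β]` induces a bijection from
`{paths β in Z with β(0) = †, f(β(1)) = *}` modulo the relation
`β ∼ β' ⟺ ∃ ε vertical path in f⁻¹(*) from β(1) to β'(1) with β#ε ≃ β'`
onto `B(f,†,*)`: every class in `B(f,†,*)` is of the form `[f∘β]`, and
`[f∘β] = [f∘β']` iff `β ∼ β'`. -/
theorem biset_of_fibration_description {Z X : Type u}
    [TopologicalSpace Z] [TopologicalSpace X]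
    [PathConnectedSpace Z] [PathConnectedSpace X]
    (f : C(Z, X)) (hf : IsFibration.{u} ⇑f) (dag : Z) (st : X) :
    (∀ q : Path.Homotopic.Quotient (f dag) st,
      ∃ (z : Z) (hz : f z = st) (β : Path dag z),
        q = pQ ((β.map f.continuous).cast rfl hz.symm)) ∧
    (∀ (z z' : Z) (hz : f z = st) (hz' : f z' = st)
        (β : Path dag z) (β' : Path dag z'),
      pQ ((β.map f.continuous).cast rfl hz.symm) =
          pQ ((β'.map f.continuous).cast rfl hz'.symm) ↔
        ∃ ε : Path z z', (∀ t, f (ε t) = st) ∧ (β.trans ε).Homotopic β') := by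
  refine ⟨fun q => ?_, fun z z' hz hz' β β' => ⟨fun h => ?_, ?_⟩⟩
  · obtain ⟨γ, rfl⟩ := Path.Homotopic.Quotient.mk_surjective q
    obtain ⟨z, β, hβ⟩ := hf.lift_path γ
    refine ⟨z, by simpa using hβ 1, β, congrArg Path.Homotopic.Quotient.mk ?_⟩
    ext t
    exact (hβ t).symm
  · set b := (β.map f.continuous).cast rfl hz.symm
    set b' := (β'.map f.continuous).cast rfl hz'.symm
    have hnull : (b.symm.trans b').Homotopic (Path.refl st) := by
      have h' : Path.Homotopic.Quotient.mk b = Path.Homotopic.Quotient.mk b' := h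
      rw [← Path.Homotopic.Quotient.eq, Path.Homotopic.Quotient.mk_trans,
        Path.Homotopic.Quotient.mk_symm, h', Path.Homotopic.Quotient.symm_trans,
        Path.Homotopic.Quotient.mk_refl]
    obtain ⟨G⟩ := hnull
    obtain ⟨ε, hε, hεα⟩ := hf.exists_vertical_path (x := st) (β.symm.trans β')
      ⟨fun p => G (p.2, p.1), by fun_prop⟩
      (fun s => by
        refine Eq.trans ?_ (G.apply_zero s).symm
        change f (β.symm.trans β' s) = b.symm.trans b' s
        rw [Path.trans_apply, Path.trans_apply]
        split_ifs <;> rfl)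
      (fun t => G.source t) (fun s => G.apply_one s) (fun t => G.target t)
    refine ⟨ε, hε, ?_⟩
    rw [← Path.Homotopic.Quotient.eq] at hεα ⊢
    rw [Path.Homotopic.Quotient.mk_trans, hεα, Path.Homotopic.Quotient.mk_trans,
      Path.Homotopic.Quotient.mk_symm, ← Path.Homotopic.Quotient.trans_assoc,
      Path.Homotopic.Quotient.trans_symm, Path.Homotopic.Quotient.refl_trans]
  · rintro ⟨ε, hε, h⟩
    have hmap := (h.map f).pathCast rfl hz'.symm
    have hsplit : ((β.trans ε).map f.continuous).cast rfl hz'.symm =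
        ((β.map f.continuous).cast rfl hz.symm).trans (Path.refl st) := by
      ext t
      change f (β.trans ε t) = _
      rw [Path.trans_apply, Path.trans_apply]
      split_ifs
      exacts [rfl, hε _]
    rw [hsplit] at hmap
    exact Path.Homotopic.Quotient.eq.2 ((Path.Homotopic.trans_refl _).symm.trans hmap)
end

section
/- Let (Z,f,i) be a topological correspondence from Y to X with Y and X path connected, basepoints † ∈ Y and * ∈ X, and suppose f : Z → X is a fibration. Then the map sending a pair (δ,p) — where p ∈ Z with f(p) = * and δ is a path in Y from † to i(p) — to the class of the triple (δ, p, const_*) (const_* the constant path at *) induces a bijection from {(δ,p)}/∼ onto B(f,i), where (δ,p) ∼ (δ',p') if and only if there exists a path ε in Z with image contained in f⁻¹(*), ε(0) = p, ε(1) = p', such that δ#(i∘ε) is homotopic to δ' rel endpoints. This bijection is equivariant for the left π₁(Y,†)-actions, where π₁(Y,†) acts on pairs by [α]·[(δ,p)] = [(α#δ, p)]. -/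
/-!
Two triples represent the same element of `B(f,i)` exactly when a single slide along one path `q`
of `Z`, followed by homotopies, carries one to the other (`SlideRel`): such slides compose and
reverse, so they already form an equivalence relation (`slideRel_of_eqvGen`).

Surjectivity: lift `γ` to a path `q` of `Z` starting at `p`, and slide along `q`. The new endpoint
lies over `*`, and the new third component `(f∘q)⁻¹ # γ` is null-homotopic.

Injectivity: if `(δ,p,const)` and `(δ',p',const)` are equivalent, the path `q` from `p` to `p'`
provided by `SlideRel` projects to a null-homotopic loop at `*`. Lifting the null-homotopy to a
square in `Z` starting with `q`, the other three sides of the square lie over `*`, and together they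
form a vertical path homotopic to `q` (`exists_vertical_path`); this is the required `ε`.
Equivariance is then immediate from this description of equality of classes.
-/

universe u

/-- A representative of an element of the biset `B(f,i)` of a topological correspondence
`(Z,f,i)` from `Y` to `X`. -/
structure CorrTriple {Y X Z : Type*} [TopologicalSpace Y] [TopologicalSpace X]
    [TopologicalSpace Z] (f : C(Z, X)) (i : C(Z, Y)) (dag : Y) (st : X) where
  pt : Z
  del : Path dag (i pt)
  gam : Path (f pt) st

/-- The relation generating the defining equivalence of `B(f,i)`. -/
inductive CorrRel {Y X Z : Type*} [TopologicalSpace Y] [TopologicalSpace X]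
    [TopologicalSpace Z] (f : C(Z, X)) (i : C(Z, Y)) (dag : Y) (st : X) :
    CorrTriple f i dag st → CorrTriple f i dag st → Prop
  | homotopic (p : Z) (δ δ' : Path dag (i p)) (γ γ' : Path (f p) st) :
      δ.Homotopic δ' → γ.Homotopic γ' →
      CorrRel f i dag st ⟨p, δ, γ⟩ ⟨p, δ', γ'⟩
  | slide (p p' : Z) (q : Path p p') (δ : Path dag (i p)) (γ : Path (f p) st) :
      CorrRel f i dag st ⟨p, δ, γ⟩
        ⟨p', δ.trans (q.map i.continuous), ((q.map f.continuous).symm).trans γ⟩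

namespace CorrBiset

open unitInterval Path Path.Homotopic

instance : ContractibleSpace I :=
  (convex_Icc (0 : ℝ) 1).contractibleSpace ⟨0, by simp⟩

section

variable {Y X Z : Type*} [TopologicalSpace Y] [TopologicalSpace X] [TopologicalSpace Z]

/-- `T'` arises from `T` by one slide along a path `q` of `Z`, up to homotopy. The condition on the
paths in `X` is written `γ ≃ (f∘q) # γ'` instead of the equivalent `(f∘q)⁻¹ # γ ≃ γ'`. -/
def SlideRel (f : C(Z, X)) (i : C(Z, Y)) {dag : Y} {st : X} (T T' : CorrTriple f i dag st) : Prop :=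
  ∃ q : Path T.pt T'.pt, (T.del.trans (q.map i.continuous)).Homotopic T'.del ∧
    T.gam.Homotopic ((q.map f.continuous).trans T'.gam)

theorem slideRel_of_eqvGen {f : C(Z, X)} {i : C(Z, Y)} {dag : Y} {st : X}
    {T T' : CorrTriple f i dag st} (h : Relation.EqvGen (CorrRel f i dag st) T T') :
    SlideRel f i T T' := by
  induction h with
  | rel T T' h =>
    cases h with
    | homotopic p δ δ' γ γ' hδ hγ =>
      refine ⟨Path.refl p, ?_, ?_⟩
      · exact (trans_refl δ).trans hδ
      · exact hγ.trans (refl_trans γ').symm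
    | slide p p' q δ γ =>
      refine ⟨q, Path.Homotopic.refl _, ?_⟩
      rw [← Homotopic.Quotient.eq]
      simp only [Homotopic.Quotient.mk_trans, Homotopic.Quotient.mk_symm,
        ← Homotopic.Quotient.trans_assoc, Homotopic.Quotient.trans_symm, Homotopic.Quotient.refl_trans]
  | refl T =>
    refine ⟨Path.refl _, ?_, ?_⟩
    · exact trans_refl _
    · exact (refl_trans _).symm
  | symm T T' _ ih =>
    obtain ⟨q, h₁, h₂⟩ := ih
    refine ⟨q.symm, ?_, ?_⟩
    · rw [← Homotopic.Quotient.eq] at h₁ ⊢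
      simp only [Homotopic.Quotient.mk_trans] at h₁ ⊢
      rw [← h₁, ← Path.map_symm, Homotopic.Quotient.mk_symm,
        Homotopic.Quotient.trans_assoc, Homotopic.Quotient.trans_symm,
        Homotopic.Quotient.trans_refl]
    · rw [← Homotopic.Quotient.eq] at h₂ ⊢
      simp only [Homotopic.Quotient.mk_trans] at h₂ ⊢
      rw [h₂, ← Path.map_symm, Homotopic.Quotient.mk_symm,
        ← Homotopic.Quotient.trans_assoc, Homotopic.Quotient.symm_trans,
        Homotopic.Quotient.refl_trans]
  | trans T T' T'' _ _ ih ih' =>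
    obtain ⟨q, h₁, h₂⟩ := ih
    obtain ⟨r, h₃, h₄⟩ := ih'
    refine ⟨q.trans r, ?_, ?_⟩
    · rw [← Homotopic.Quotient.eq] at h₁ h₃ ⊢
      simp only [Homotopic.Quotient.mk_trans] at h₁ h₃ ⊢
      rw [← h₃, ← h₁, Path.map_trans, Homotopic.Quotient.mk_trans, Homotopic.Quotient.trans_assoc]
    · rw [← Homotopic.Quotient.eq] at h₂ h₄ ⊢
      simp only [Homotopic.Quotient.mk_trans] at h₂ h₄ ⊢
      rw [h₂, h₄, Path.map_trans, Homotopic.Quotient.mk_trans, Homotopic.Quotient.trans_assoc]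

theorem symm_trans_homotopic_const {a b s : X} (h : b = s) (w : Path a b) (γ : Path a s)
    (hw : ∀ t, w t = γ t) : (w.symm.trans γ).Homotopic ((Path.refl s).cast h rfl) := by
  subst h
  obtain rfl : w = γ := Path.ext (funext hw)
  exact symm_trans w

theorem cast_homotopic_refl {a b s : X} (h : a = s) (h' : b = s) (w : Path a b)
    (hw : ((Path.refl s).cast h rfl).Homotopic (w.trans ((Path.refl s).cast h' rfl))) :
    (w.cast h.symm h'.symm).Homotopic (Path.refl s) := by
  subst h'
  subst h
  exact ((trans_refl w).symm.trans hw.symm)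

theorem trans_forall {P : X → Prop} {a b c : X} (u : Path a b) (v : Path b c)
    (hu : ∀ t, P (u t)) (hv : ∀ t, P (v t)) (t : I) : P (u.trans v t) := by
  rw [Path.trans_apply]
  split_ifs
  · exact hu _
  · exact hv _

/-- If three sides of a square in `Z` lie over `st`, then the fourth side is homotopic to the
path which runs along these three sides. -/
theorem exists_vertical_path_of_square {B : Type*} (f : Z → B) {st : B} {p p' : Z} (q : Path p p')
    (G : C(I × I, Z)) (hq : ∀ s, G (s, 0) = q s) (hl : ∀ t, f (G (0, t)) = st)
    (ht : ∀ s, f (G (s, 1)) = st) (hr : ∀ t, f (G (1, t)) = st) :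
    ∃ ε : Path p p', (∀ t, f (ε t) = st) ∧ ε.Homotopic q := by
  let e : Path (0 : I) 1 := ⟨ContinuousMap.id I, rfl, rfl⟩
  let b : Path ((0 : I), (0 : I)) (1, 0) := e.prod (Path.refl 0)
  let ε₀ : Path ((0 : I), (0 : I)) (1, 0) :=
    (((Path.refl 0).prod e).trans (e.prod (Path.refl 1))).trans ((Path.refl 1).prod e).symm
  have hε₀ : ∀ t, f (G (ε₀ t)) = st :=
    trans_forall (P := fun x ↦ f (G x) = st) _ _
      (trans_forall (P := fun x ↦ f (G x) = st) _ _ (fun t ↦ hl t) (fun t ↦ ht t))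
      (fun t ↦ hr (σ t))
  have h0 : p = G (0, 0) := by rw [hq, q.source]
  have h1 : p' = G (1, 0) := by rw [hq, q.target]
  -- the square is simply connected, so its two boundary paths are homotopic
  have hh : ε₀.Homotopic b := SimplyConnectedSpace.paths_homotopic _ _
  refine ⟨(ε₀.map G.continuous).cast h0 h1, hε₀, ?_⟩
  have hb : (b.map G.continuous).cast h0 h1 = q := Path.ext (funext fun s ↦ hq s)
  rw [← hb]
  exact (hh.map G).pathCast h0 h1

end

universe v

theorem exists_path_lift {X Z : Type v} [TopologicalSpace X] [TopologicalSpace Z] {f : C(Z, X)}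
    (hf : IsFibration.{v} ⇑f) {st : X} (p : Z) (γ : Path (f p) st) :
    ∃ (p' : Z) (q : Path p p'), f p' = st ∧ ∀ t, f (q t) = γ t := by
  obtain ⟨H, h0, hH⟩ := hf PUnit ⟨fun x ↦ γ x.2, by fun_prop⟩ ⟨fun _ ↦ p, continuous_const⟩
    (fun _ ↦ γ.source.symm)
  refine ⟨H (.unit, 1), ⟨⟨fun t ↦ H (.unit, t), by fun_prop⟩, h0 _, rfl⟩, ?_, fun t ↦ hH _⟩
  rw [hH]
  exact γ.target

/-- A path of `Z` whose projection is a null-homotopic loop is homotopic to a path in the fibre. -/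
theorem exists_vertical_path {X Z : Type v} [TopologicalSpace X] [TopologicalSpace Z] {f : C(Z, X)}
    (hf : IsFibration.{v} ⇑f) {st : X} {p p' : Z} (hp : f p = st) (hp' : f p' = st)
    (q : Path p p')
    (hq : ((q.map f.continuous).cast hp.symm hp'.symm).Homotopic (Path.refl st)) :
    ∃ ε : Path p p', (∀ t, f (ε t) = st) ∧ ε.Homotopic q := by
  obtain ⟨K⟩ := hq
  obtain ⟨H, h0, hH⟩ := hf (ULift.{v} I) ⟨fun x ↦ K (x.2, x.1.down), by fun_prop⟩
    ⟨fun s ↦ q s.down, by fun_prop⟩ (fun s ↦ (K.apply_zero s.down).symm)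
  refine exists_vertical_path_of_square f q ⟨fun x ↦ H (ULift.up x.1, x.2), by fun_prop⟩
    (fun s ↦ h0 _) (fun t ↦ (hH _).trans (K.source t)) (fun s ↦ (hH _).trans (K.apply_one s))
    (fun t ↦ (hH _).trans (K.target t))

/-- Two triples over `st` are equivalent exactly when a vertical path relates them. -/
theorem mk_eq_mk_iff {Y X Z : Type v} [TopologicalSpace Y] [TopologicalSpace X]
    [TopologicalSpace Z] {f : C(Z, X)} {i : C(Z, Y)} (hf : IsFibration.{v} ⇑f) {dag : Y} {st : X}
    {p p' : Z} (hp : f p = st) (hp' : f p' = st) (δ : Path dag (i p)) (δ' : Path dag (i p')) :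
    (Quot.mk (CorrRel f i dag st) ⟨p, δ, (Path.refl st).cast hp rfl⟩ =
        Quot.mk _ ⟨p', δ', (Path.refl st).cast hp' rfl⟩) ↔
      ∃ ε : Path p p', (∀ t, f (ε t) = st) ∧
        (δ.trans (ε.map i.continuous)).Homotopic δ' := by
  constructor
  · intro h
    obtain ⟨q, h₁, h₂⟩ := slideRel_of_eqvGen (Quot.eqvGen_exact h)
    obtain ⟨ε, hε, hεq⟩ := exists_vertical_path hf hp hp' q (cast_homotopic_refl hp hp' _ h₂)
    exact ⟨ε, hε, ((Path.Homotopic.refl δ).hcomp (hεq.map i)).trans h₁⟩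
  · rintro ⟨ε, hε, h⟩
    exact (Quot.sound (.slide p p' ε δ _)).trans
      (Quot.sound (.homotopic p' _ _ _ _ h (symm_trans_homotopic_const hp' _ _ hε)))

end CorrBiset

/-- Let `(Z,f,i)` be a correspondence from `Y` to `X` with `Y`, `X`
path connected, and suppose `f` is a fibration.  Then `(δ,p) ↦ [(δ, p, const_*)]`
induces a bijection from pairs `(δ,p)` — `p ∈ f⁻¹(*)`, `δ` a path from `†` to `i(p)` —
modulo the relation `(δ,p) ∼ (δ',p') ⟺ ∃ ε vertical path in f⁻¹(*) from p to p' with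
δ#(i∘ε) ≃ δ'`, onto `B(f,i)`; moreover this bijection is equivariant for the left
`π₁(Y,†)`-actions (which act on both sides by prepending a loop to `δ`). -/
theorem biset_of_correspondence_with_fibration {Y X Z : Type u}
    [TopologicalSpace Y] [TopologicalSpace X] [TopologicalSpace Z]
    [PathConnectedSpace Y] [PathConnectedSpace X]
    (f : C(Z, X)) (i : C(Z, Y)) (hf : IsFibration.{u} ⇑f) (dag : Y) (st : X) :
    -- surjectivity
    (∀ x : Quot (CorrRel f i dag st),
      ∃ (p : Z) (hp : f p = st) (δ : Path dag (i p)),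
        x = Quot.mk _ ⟨p, δ, (Path.refl st).cast hp rfl⟩) ∧
    -- injectivity: equality of classes is exactly the relation ∼
    (∀ (p p' : Z) (hp : f p = st) (hp' : f p' = st)
        (δ : Path dag (i p)) (δ' : Path dag (i p')),
      (Quot.mk (CorrRel f i dag st) ⟨p, δ, (Path.refl st).cast hp rfl⟩ =
          Quot.mk _ ⟨p', δ', (Path.refl st).cast hp' rfl⟩) ↔
        ∃ ε : Path p p', (∀ t, f (ε t) = st) ∧
          (δ.trans (ε.map i.continuous)).Homotopic δ') ∧
    -- equivariance for the left π₁(Y,†)-actions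
    (∀ (α : Path dag dag) (p p' : Z) (hp : f p = st) (hp' : f p' = st)
        (δ : Path dag (i p)) (δ' : Path dag (i p')),
      (Quot.mk (CorrRel f i dag st) ⟨p, δ, (Path.refl st).cast hp rfl⟩ =
          Quot.mk _ ⟨p', δ', (Path.refl st).cast hp' rfl⟩) →
        Quot.mk (CorrRel f i dag st) ⟨p, α.trans δ, (Path.refl st).cast hp rfl⟩ =
          Quot.mk _ ⟨p', α.trans δ', (Path.refl st).cast hp' rfl⟩) := by
  refine ⟨fun x ↦ ?_, fun p p' hp hp' δ δ' ↦ CorrBiset.mk_eq_mk_iff hf hp hp' δ δ',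
    fun α p p' hp hp' δ δ' h ↦ ?_⟩
  · induction x using Quot.ind with
    | mk T =>
      obtain ⟨p, δ, γ⟩ := T
      obtain ⟨p', q, hp', hq⟩ := CorrBiset.exists_path_lift hf p γ
      exact ⟨p', hp', δ.trans (q.map i.continuous), (Quot.sound (.slide p p' q δ γ)).trans
        (Quot.sound (.homotopic p' _ _ _ _ (Path.Homotopic.refl _)
          (CorrBiset.symm_trans_homotopic_const hp' _ _ hq)))⟩
  · obtain ⟨ε, hε, h⟩ := (CorrBiset.mk_eq_mk_iff hf hp hp' δ δ').1 h
    exact (CorrBiset.mk_eq_mk_iff hf hp hp' _ _).2 ⟨ε, hε,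
      (Path.Homotopic.trans_assoc α δ _).trans ((Path.Homotopic.refl α).hcomp h)⟩
end

section
/- Let (Z,f,i) be a topological correspondence from Y to X with Y and X path connected, basepoints † ∈ Y and * ∈ X, and suppose f : Z → X is a covering map. For each p ∈ f⁻¹(*) choose a path δ_p in Y from † to i(p). Then the map π₁(Y,†) × f⁻¹(*) → B(f,i) sending (g, p) to g·[(δ_p, p, const_*)] (const_* the constant path at *) is a bijection. In particular, B(f,i) is a free left π₁(Y,†)-set with a basis indexed by the fiber f⁻¹(*). -/
section

variable {Y X Z : Type*} [TopologicalSpace Y] [TopologicalSpace X] [TopologicalSpace Z]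

theorem quotient_map_trans {x y z : Z} (P : Path.Homotopic.Quotient x y)
    (Q : Path.Homotopic.Quotient y z) (f : C(Z, X)) :
    (P.trans Q).map f = (P.map f).trans (Q.map f) := by
  induction P using Path.Homotopic.Quotient.ind with | mk P =>
  induction Q using Path.Homotopic.Quotient.ind with | mk Q =>
  simp only [← Path.Homotopic.Quotient.mk_trans, ← Path.Homotopic.Quotient.mk_map]
  rw [Path.map_trans]

theorem quotient_map_symm {x y : Z} (P : Path.Homotopic.Quotient x y) (f : C(Z, X)) :
    P.symm.map f = (P.map f).symm := by
  induction P using Path.Homotopic.Quotient.ind with | mk P =>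
  rfl

theorem quotient_map_refl (x : Z) (f : C(Z, X)) :
    (Path.Homotopic.Quotient.refl x).map f = Path.Homotopic.Quotient.refl (f x) := rfl

theorem quotient_trans_right_cancel {x y z : Y} {P Q : Path.Homotopic.Quotient x y}
    (R : Path.Homotopic.Quotient y z) (h : P.trans R = Q.trans R) : P = Q := by
  have := congrArg (fun S => S.trans R.symm) h
  simpa [Path.Homotopic.Quotient.trans_assoc] using this

/-- The pairs `(r, [δ] · [i ∘ Γ])` obtained from the triple `(δ, p, γ)` and a homotopy class `Γ` of
paths in `Z` from `p` to a point `r` of the fiber over `*` with `f ∘ Γ = [γ]`. For a covering map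
`f` this is a singleton. -/
def normalForms (f : C(Z, X)) (i : C(Z, Y)) (dag : Y) (st : X) (t : CorrTriple f i dag st) :
    Set (Σ r : Z, Path.Homotopic.Quotient dag (i r)) :=
  {d | ∃ (hr : f d.1 = st) (Γ : Path.Homotopic.Quotient t.pt d.1),
    Γ.map f = (Path.Homotopic.Quotient.mk t.gam).cast rfl hr ∧ d.2 = (Path.Homotopic.Quotient.mk t.del).trans (Γ.map i)}

theorem normalForms_eq_of_rel (f : C(Z, X)) (i : C(Z, Y)) (dag : Y) (st : X)
    (t t' : CorrTriple f i dag st) (h : CorrRel f i dag st t t') :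
    normalForms f i dag st t = normalForms f i dag st t' := by
  cases h with
  | homotopic p δ δ' γ γ' hδ hγ =>
    simp only [normalForms, Path.Homotopic.Quotient.eq.mpr hδ, Path.Homotopic.Quotient.eq.mpr hγ]
  | slide p p' q δ γ =>
    ext ⟨r, D⟩
    constructor
    · rintro ⟨hr, Γ, h1, h2⟩
      dsimp only at hr Γ h1 h2
      subst hr
      refine ⟨rfl, (Path.Homotopic.Quotient.mk q).symm.trans Γ, ?_, ?_⟩
      · simp only [Path.Homotopic.Quotient.cast_rfl_rfl] at h1 ⊢
        rw [quotient_map_trans, h1, quotient_map_symm]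
        rfl
      · simp only [Path.Homotopic.Quotient.mk_trans, Path.Homotopic.Quotient.mk_map]
        rw [h2, quotient_map_trans, quotient_map_symm, Path.Homotopic.Quotient.trans_assoc,
          ← Path.Homotopic.Quotient.trans_assoc _ _ (Γ.map i)]
        simp
    · rintro ⟨hr, Γ, h1, h2⟩
      dsimp only at hr Γ h1 h2
      subst hr
      refine ⟨rfl, (Path.Homotopic.Quotient.mk q).trans Γ, ?_, ?_⟩
      · simp only [Path.Homotopic.Quotient.cast_rfl_rfl, Path.Homotopic.Quotient.mk_trans, Path.Homotopic.Quotient.mk_symm,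
          Path.Homotopic.Quotient.mk_map] at h1 ⊢
        rw [quotient_map_trans, h1, ← Path.Homotopic.Quotient.trans_assoc]
        simp
      · rw [h2, quotient_map_trans]
        simp only [Path.Homotopic.Quotient.mk_trans, Path.Homotopic.Quotient.mk_map, Path.Homotopic.Quotient.trans_assoc]

/-- A class of paths lifting the constant class is constant, so over a constant `γ` the only
normal form of `(δ, p, γ)` is `(p, [δ])`. -/
theorem eq_of_mem_normalForms_const (f : C(Z, X)) (i : C(Z, Y)) (hf : IsCoveringMap f)
    (dag : Y) (st : X) (p : Z) (hp : f p = st) (δ : Path dag (i p))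
    (d : Σ r : Z, Path.Homotopic.Quotient dag (i r))
    (hd : d ∈ normalForms f i dag st ⟨p, δ, (Path.refl st).cast hp rfl⟩) :
    d = ⟨p, Path.Homotopic.Quotient.mk δ⟩ := by
  obtain ⟨r, D⟩ := d
  obtain ⟨hr, Γ, h1, h2⟩ := hd
  dsimp only at hr Γ h1 h2
  have key := hf.monodromy_eq_of_map_eq (γ := Path.Homotopic.Quotient.refl st) (ex := ⟨p, hp⟩) (ey := ⟨r, hr⟩)
    Γ h1
  rw [hf.monodromy_refl] at key
  obtain rfl : p = r := congrArg Subtype.val key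
  subst hp
  have hΓ : Γ = Path.Homotopic.Quotient.refl p := hf.injective_path_homotopic_map p p h1
  rw [h2, hΓ, quotient_map_refl, Path.Homotopic.Quotient.trans_refl]

theorem mem_normalForms_const (f : C(Z, X)) (i : C(Z, Y))
    (dag : Y) (st : X) (p : Z) (hp : f p = st) (δ : Path dag (i p)) :
    ⟨p, Path.Homotopic.Quotient.mk δ⟩ ∈ normalForms f i dag st ⟨p, δ, (Path.refl st).cast hp rfl⟩ := by
  subst hp
  exact ⟨rfl, Path.Homotopic.Quotient.refl p, rfl, by rw [quotient_map_refl, Path.Homotopic.Quotient.trans_refl]⟩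

theorem exists_path_lift (f : C(Z, X)) (hf : IsCoveringMap f) (p : Z) (st : X)
    (γ : Path (f p) st) :
    ∃ (r : Z) (hr : f r = st) (q : Path p r), q.map f.continuous = γ.cast rfl hr := by
  have h0 : (γ : C(unitInterval, X)) 0 = f p := γ.source
  have hl := hf.liftPath_lifts (γ : C(unitInterval, X)) p h0
  refine ⟨hf.liftPath γ p h0 1, (congrFun hl 1).trans γ.target,
    ⟨hf.liftPath γ p h0, hf.liftPath_zero _ p h0, rfl⟩, ?_⟩
  ext t
  exact congrFun hl t

end

/-- Let `(Z,f,i)` be a correspondence from `Y` to `X`, `Y`, `X` path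
connected, with `f` a covering map, and choose for each `p ∈ f⁻¹(*)` a path `δ_p` from
`†` to `i(p)`.  Then `(g,p) ↦ g·[(δ_p, p, const_*)]` is a bijection from
`π₁(Y,†) × f⁻¹(*)` onto `B(f,i)`: every element of `B(f,i)` is of the form
`[(g#δ_p, p, const_*)]`, and `[(g#δ_p, p, const_*)] = [(g'#δ_{p'}, p', const_*)]` iff
`p = p'` and `[g] = [g']`.  In particular `B(f,i)` is a free left `π₁(Y,†)`-set with
basis indexed by the fiber `f⁻¹(*)`. -/
theorem biset_of_covering_correspondence_free {Y X Z : Type*}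
    [TopologicalSpace Y] [TopologicalSpace X] [TopologicalSpace Z]
    [PathConnectedSpace Y] [PathConnectedSpace X]
    (f : C(Z, X)) (i : C(Z, Y)) (hf : IsCoveringMap ⇑f) (dag : Y) (st : X)
    (δp : ∀ p : Z, f p = st → Path dag (i p)) :
    (∀ x : Quot (CorrRel f i dag st),
      ∃ (g : Path dag dag) (p : Z) (hp : f p = st),
        x = Quot.mk _ ⟨p, g.trans (δp p hp), (Path.refl st).cast hp rfl⟩) ∧
    (∀ (g g' : Path dag dag) (p p' : Z) (hp : f p = st) (hp' : f p' = st),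
      (Quot.mk (CorrRel f i dag st)
            ⟨p, g.trans (δp p hp), (Path.refl st).cast hp rfl⟩ =
          Quot.mk _ ⟨p', g'.trans (δp p' hp'), (Path.refl st).cast hp' rfl⟩) ↔
        (p = p' ∧ pQ g = pQ g')) := by
  refine ⟨?_, ?_⟩
  · rintro ⟨p, δ, γ⟩
    obtain ⟨r, hr, q, hq⟩ := exists_path_lift f hf p st γ
    refine ⟨(δ.trans (q.map i.continuous)).trans (δp r hr).symm, r, hr, ?_⟩
    refine (Quot.sound (CorrRel.slide p r q δ γ)).trans (Quot.sound ?_)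
    subst hr
    refine CorrRel.homotopic r _ _ _ _ ?_ ?_
    · rw [← Path.Homotopic.Quotient.eq]
      simp [Path.Homotopic.Quotient.trans_assoc]
    · rw [← Path.Homotopic.Quotient.eq, hq]
      exact Path.Homotopic.Quotient.symm_trans (Path.Homotopic.Quotient.mk γ)
  · intro g g' p p' hp hp'
    constructor
    · intro h
      have hN : normalForms f i dag st ⟨p, g.trans (δp p hp), (Path.refl st).cast hp rfl⟩ =
          normalForms f i dag st ⟨p', g'.trans (δp p' hp'), (Path.refl st).cast hp' rfl⟩ :=
        congrArg (Quot.lift (normalForms f i dag st) (normalForms_eq_of_rel f i dag st)) h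
      have hmem := mem_normalForms_const f i dag st p hp (g.trans (δp p hp))
      rw [hN] at hmem
      have heq := eq_of_mem_normalForms_const f i hf dag st p' hp' _ _ hmem
      obtain rfl : p = p' := congrArg Sigma.fst heq
      exact ⟨rfl, quotient_trans_right_cancel (Path.Homotopic.Quotient.mk (δp p hp))
        (eq_of_heq (Sigma.mk.inj heq).2)⟩
    · rintro ⟨rfl, h⟩
      exact Quot.sound (CorrRel.homotopic p _ _ _ _
        (Path.Homotopic.hcomp (Path.Homotopic.Quotient.exact h) (Path.Homotopic.refl _))
        (Path.Homotopic.refl _))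
end

section
/- Let (Z₁,f₁,i₁) be a topological correspondence from Y to X and (Z₂,f₂,i₂) a topological correspondence from X to W, with X path connected, and let (Z,f,i) be their product. Fix basepoints † ∈ Y, * ∈ X, ‡ ∈ W. Then the assignment [(δ,(z₁,z₂),γ)] ↦ [(δ, z₁, ε⁻¹)] ⊗ [(ε, z₂, γ)], where ε is any path in X from * to f₁(z₁) = i₂(z₂), is a well-defined map B(f,i) → B(f₁,i₁) ⊗_{π₁(X,*)} B(f₂,i₂): it is independent of the choice of ε and of the representative of the class, and it is a morphism of π₁(Y,†)-π₁(W,‡)-bisets. -/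
/-- The total space of the product of two correspondences: the fiber product
`{(z₁,z₂) | f₁(z₁) = i₂(z₂)}` with the subspace topology. -/
def ProdCorrSpace {X Z₁ Z₂ : Type*} [TopologicalSpace X]
    [TopologicalSpace Z₁] [TopologicalSpace Z₂]
    (f₁ : C(Z₁, X)) (i₂ : C(Z₂, X)) : Type _ :=
  {z : Z₁ × Z₂ // f₁ z.1 = i₂ z.2}

instance {X Z₁ Z₂ : Type*} [TopologicalSpace X] [TopologicalSpace Z₁]
    [TopologicalSpace Z₂] (f₁ : C(Z₁, X)) (i₂ : C(Z₂, X)) :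
    TopologicalSpace (ProdCorrSpace f₁ i₂) :=
  instTopologicalSpaceSubtype

/-- The map `i(z₁,z₂) = i₁(z₁)` of the product correspondence. -/
def prodCorrI {Y X Z₁ Z₂ : Type*} [TopologicalSpace Y] [TopologicalSpace X]
    [TopologicalSpace Z₁] [TopologicalSpace Z₂]
    (f₁ : C(Z₁, X)) (i₁ : C(Z₁, Y)) (i₂ : C(Z₂, X)) :
    C(ProdCorrSpace f₁ i₂, Y) :=
  ⟨fun z => i₁ z.1.1, by fun_prop⟩

/-- The map `f(z₁,z₂) = f₂(z₂)` of the product correspondence. -/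
def prodCorrF {X W Z₁ Z₂ : Type*} [TopologicalSpace X] [TopologicalSpace W]
    [TopologicalSpace Z₁] [TopologicalSpace Z₂]
    (f₁ : C(Z₁, X)) (f₂ : C(Z₂, W)) (i₂ : C(Z₂, X)) :
    C(ProdCorrSpace f₁ i₂, W) :=
  ⟨fun z => f₂ z.1.2, by fun_prop⟩

/-- The relation generating the tensor product `B(f₁,i₁) ⊗_{π₁(X,*)} B(f₂,i₂)` of the
bisets of the two correspondences: the defining relations of each factor, together with
the exchange relation `(b·g) ⊗ c ∼ b ⊗ (g·c)` for `g ∈ π₁(X,*)`. -/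
def ProdTensorRel {Y X W Z₁ Z₂ : Type*} [TopologicalSpace Y] [TopologicalSpace X]
    [TopologicalSpace W] [TopologicalSpace Z₁] [TopologicalSpace Z₂]
    (f₁ : C(Z₁, X)) (i₁ : C(Z₁, Y)) (f₂ : C(Z₂, W)) (i₂ : C(Z₂, X))
    (dag : Y) (st : X) (ddw : W) :
    CorrTriple f₁ i₁ dag st × CorrTriple f₂ i₂ st ddw →
      CorrTriple f₁ i₁ dag st × CorrTriple f₂ i₂ st ddw → Prop :=
  fun t u =>
    (CorrRel f₁ i₁ dag st t.1 u.1 ∧ t.2 = u.2) ∨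
    (t.1 = u.1 ∧ CorrRel f₂ i₂ st ddw t.2 u.2) ∨
    (∃ (g : Path st st) (p : Z₁) (δ : Path dag (i₁ p)) (γ : Path (f₁ p) st)
        (q : Z₂) (δ' : Path st (i₂ q)) (γ' : Path (f₂ q) ddw),
      t = (⟨p, δ, γ.trans g⟩, ⟨q, δ', γ'⟩) ∧
      u = (⟨p, δ, γ⟩, ⟨q, g.trans δ', γ'⟩))

/-- Each factor of a tensor may be changed by a generating relation of its own biset. -/
theorem tensor_congr {Y X W Z₁ Z₂ : Type*}
    [TopologicalSpace Y] [TopologicalSpace X] [TopologicalSpace W]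
    [TopologicalSpace Z₁] [TopologicalSpace Z₂]
    {f₁ : C(Z₁, X)} {i₁ : C(Z₁, Y)} {f₂ : C(Z₂, W)} {i₂ : C(Z₂, X)}
    {dag : Y} {st : X} {ddw : W}
    {s s' : CorrTriple f₁ i₁ dag st} {t t' : CorrTriple f₂ i₂ st ddw}
    (hs : CorrRel f₁ i₁ dag st s s') (ht : CorrRel f₂ i₂ st ddw t t') :
    Quot.mk (ProdTensorRel f₁ i₁ f₂ i₂ dag st ddw) (s, t) = Quot.mk _ (s', t') := by
  have left : ProdTensorRel f₁ i₁ f₂ i₂ dag st ddw (s, t) (s', t) := Or.inl ⟨hs, rfl⟩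
  have right : ProdTensorRel f₁ i₁ f₂ i₂ dag st ddw (s', t) (s', t') :=
    Or.inr (Or.inl ⟨rfl, ht⟩)
  exact (Quot.sound left).trans (Quot.sound right)

/-- `ε⁻¹ # (ε # ε'⁻¹) ≃ ε'⁻¹`. -/
theorem symm_trans_trans_symm_homotopic {X : Type*} [TopologicalSpace X] {a x : X}
    (ε ε' : Path a x) : (ε.symm.trans (ε.trans ε'.symm)).Homotopic ε'.symm := by
  rw [← Path.Homotopic.Quotient.eq]
  simp only [Path.Homotopic.Quotient.mk_trans, Path.Homotopic.Quotient.mk_symm]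
  rw [← Path.Homotopic.Quotient.trans_assoc, Path.Homotopic.Quotient.symm_trans,
    Path.Homotopic.Quotient.refl_trans]

/-- `(ε # ε'⁻¹) # ε' ≃ ε`, with the endpoint transported along an equality. -/
theorem trans_symm_trans_cast_homotopic {X : Type*} [TopologicalSpace X] {a x y : X}
    (h : x = y) (ε ε' : Path a x) :
    ((ε.trans ε'.symm).trans (ε'.cast rfl h.symm)).Homotopic (ε.cast rfl h.symm) := by
  subst h
  rw [← Path.Homotopic.Quotient.eq]
  simp only [Path.cast_rfl_rfl, Path.Homotopic.Quotient.mk_trans,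
    Path.Homotopic.Quotient.mk_symm]
  rw [Path.Homotopic.Quotient.trans_assoc, Path.Homotopic.Quotient.symm_trans,
    Path.Homotopic.Quotient.trans_refl]

/-- The tensor `(δ,z₁,ε⁻¹) ⊗ (ε,z₂,γ)` does not depend on `ε`. -/
theorem tensor_eq_of_paths {Y X W Z₁ Z₂ : Type*}
    [TopologicalSpace Y] [TopologicalSpace X] [TopologicalSpace W]
    [TopologicalSpace Z₁] [TopologicalSpace Z₂]
    (f₁ : C(Z₁, X)) (i₁ : C(Z₁, Y)) (f₂ : C(Z₂, W)) (i₂ : C(Z₂, X))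
    (dag : Y) (st : X) (ddw : W) (z₁ : Z₁) (z₂ : Z₂) (h : f₁ z₁ = i₂ z₂)
    (δ : Path dag (i₁ z₁)) (γ : Path (f₂ z₂) ddw) (ε ε' : Path st (f₁ z₁)) :
    Quot.mk (ProdTensorRel f₁ i₁ f₂ i₂ dag st ddw)
        (⟨z₁, δ, ε.symm⟩, ⟨z₂, ε.cast rfl h.symm, γ⟩) =
      Quot.mk _ (⟨z₁, δ, ε'.symm⟩, ⟨z₂, ε'.cast rfl h.symm, γ⟩) := by
  have exchange : Quot.mk (ProdTensorRel f₁ i₁ f₂ i₂ dag st ddw)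
        (⟨z₁, δ, ε.symm.trans (ε.trans ε'.symm)⟩, ⟨z₂, ε'.cast rfl h.symm, γ⟩) =
      Quot.mk _
        (⟨z₁, δ, ε.symm⟩, ⟨z₂, (ε.trans ε'.symm).trans (ε'.cast rfl h.symm), γ⟩) :=
    Quot.sound (Or.inr (Or.inr ⟨_, _, _, _, _, _, _, rfl, rfl⟩))
  have first := tensor_congr (f₁ := f₁) (i₁ := i₁) (f₂ := f₂) (i₂ := i₂)
    (CorrRel.homotopic (st := st) z₁ δ δ _ _ (.refl _) (symm_trans_trans_symm_homotopic ε ε'))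
    (CorrRel.homotopic z₂ (ε'.cast rfl h.symm) _ γ _ (.refl _) (.refl _))
  have second := tensor_congr (f₁ := f₁) (i₁ := i₁) (f₂ := f₂) (i₂ := i₂)
    (CorrRel.homotopic (st := st) z₁ δ δ ε.symm _ (.refl _) (.refl _))
    (CorrRel.homotopic z₂ _ _ γ _ (trans_symm_trans_cast_homotopic h ε ε') (.refl _))
  exact second.symm.trans (exchange.symm.trans first)

/-- Moving a representative of the product biset along a path `q` of the fiber product does not
change the tensor, for any connecting paths `ε`, `ε'` chosen at the two ends of `q`. -/
theorem tensor_eq_of_slide {Y X W Z₁ Z₂ : Type*}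
    [TopologicalSpace Y] [TopologicalSpace X] [TopologicalSpace W]
    [TopologicalSpace Z₁] [TopologicalSpace Z₂]
    (f₁ : C(Z₁, X)) (i₁ : C(Z₁, Y)) (f₂ : C(Z₂, W)) (i₂ : C(Z₂, X))
    (dag : Y) (st : X) (ddw : W) (p p' : ProdCorrSpace f₁ i₂) (q : Path p p')
    (δ : Path dag (i₁ p.1.1)) (γ : Path (f₂ p.1.2) ddw)
    (ε : Path st (f₁ p.1.1)) (ε' : Path st (f₁ p'.1.1)) :
    Quot.mk (ProdTensorRel f₁ i₁ f₂ i₂ dag st ddw)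
        (⟨p.1.1, δ, ε.symm⟩, ⟨p.1.2, ε.cast rfl p.2.symm, γ⟩) =
      Quot.mk _
        (⟨p'.1.1, δ.trans (q.map (prodCorrI f₁ i₁ i₂).continuous), ε'.symm⟩,
          ⟨p'.1.2, ε'.cast rfl p'.2.symm,
            (q.map (prodCorrF f₁ f₂ i₂).continuous).symm.trans γ⟩) := by
  let q₁ : Path p.1.1 p'.1.1 := q.map (f := fun z : ProdCorrSpace f₁ i₂ => z.1.1)
    (continuous_fst.comp continuous_subtype_val)
  let q₂ : Path p.1.2 p'.1.2 := q.map (f := fun z : ProdCorrSpace f₁ i₂ => z.1.2)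
    (continuous_snd.comp continuous_subtype_val)
  have slide := tensor_congr
    (CorrRel.slide (f := f₁) (i := i₁) p.1.1 p'.1.1 q₁ δ ε.symm)
    (CorrRel.slide (f := f₂) (i := i₂) p.1.2 p'.1.2 q₂ (ε.cast rfl p.2.symm) γ)
  -- The two images of `q` in `X` agree pointwise by the defining equation of the fiber product.
  have hq : (q₁.map f₁.continuous).cast p.2.symm p'.2.symm = q₂.map i₂.continuous := by
    ext t
    exact (q t).2
  have hcast : (ε.cast rfl p.2.symm).trans (q₂.map i₂.continuous) =
      (ε.trans (q₁.map f₁.continuous)).cast rfl p'.2.symm := by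
    rw [← hq, Path.cast_trans _ _ rfl p.2.symm]
  rw [← Path.trans_symm, hcast] at slide
  exact slide.trans (tensor_eq_of_paths f₁ i₁ f₂ i₂ dag st ddw p'.1.1 p'.1.2 p'.2 _ _ _ ε')

/-- Let `(Z,f,i)` be the product of correspondences `(Z₁,f₁,i₁)` from
`Y` to `X` and `(Z₂,f₂,i₂)` from `X` to `W`, with `X` path connected.  The assignment
`[(δ,(z₁,z₂),γ)] ↦ [(δ, z₁, ε⁻¹)] ⊗ [(ε, z₂, γ)]` — for any path `ε` in `X` from `*` to
`f₁(z₁) = i₂(z₂)` — is a well-defined map `B(f,i) → B(f₁,i₁) ⊗_{π₁(X,*)} B(f₂,i₂)`,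
independent of `ε` and of the representative, and it is a morphism of
`π₁(Y,†)`-`π₁(W,‡)`-bisets (second clause, written on representatives). -/
theorem product_correspondence_biset_morphism {Y X W Z₁ Z₂ : Type*}
    [TopologicalSpace Y] [TopologicalSpace X] [TopologicalSpace W]
    [TopologicalSpace Z₁] [TopologicalSpace Z₂] [PathConnectedSpace X]
    (f₁ : C(Z₁, X)) (i₁ : C(Z₁, Y)) (f₂ : C(Z₂, W)) (i₂ : C(Z₂, X))
    (dag : Y) (st : X) (ddw : W) :
    ∃ Θ : Quot (CorrRel (prodCorrF f₁ f₂ i₂) (prodCorrI f₁ i₁ i₂) dag ddw) →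
        Quot (ProdTensorRel f₁ i₁ f₂ i₂ dag st ddw),
      (∀ (z₁ : Z₁) (z₂ : Z₂) (h : f₁ z₁ = i₂ z₂)
          (δ : Path dag (i₁ z₁)) (γ : Path (f₂ z₂) ddw) (ε : Path st (f₁ z₁)),
        Θ (Quot.mk _ ⟨⟨(z₁, z₂), h⟩, δ, γ⟩) =
          Quot.mk _ (⟨z₁, δ, ε.symm⟩, ⟨z₂, ε.cast rfl h.symm, γ⟩)) ∧
      (∀ (α : Path dag dag) (μ : Path ddw ddw) (z₁ : Z₁) (z₂ : Z₂)
          (h : f₁ z₁ = i₂ z₂) (δ : Path dag (i₁ z₁)) (γ : Path (f₂ z₂) ddw)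
          (ε : Path st (f₁ z₁)),
        Θ (Quot.mk _ ⟨⟨(z₁, z₂), h⟩, α.trans δ, γ.trans μ⟩) =
          Quot.mk _ (⟨z₁, α.trans δ, ε.symm⟩,
            ⟨z₂, ε.cast rfl h.symm, γ.trans μ⟩)) := by
  let val : CorrTriple (prodCorrF f₁ f₂ i₂) (prodCorrI f₁ i₁ i₂) dag ddw →
      Quot (ProdTensorRel f₁ i₁ f₂ i₂ dag st ddw) := fun t =>
    Quot.mk _ (⟨t.pt.1.1, t.del, (PathConnectedSpace.somePath st (f₁ t.pt.1.1)).symm⟩,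
      ⟨t.pt.1.2, (PathConnectedSpace.somePath st (f₁ t.pt.1.1)).cast rfl t.pt.2.symm, t.gam⟩)
  have hval : ∀ s t, CorrRel (prodCorrF f₁ f₂ i₂) (prodCorrI f₁ i₁ i₂) dag ddw s t →
      val s = val t := by
    intro s t hst
    cases hst with
    | homotopic p δ δ' γ γ' hδ hγ =>
      exact tensor_congr (.homotopic _ _ _ _ _ hδ (.refl _)) (.homotopic _ _ _ _ _ (.refl _) hγ)
    | slide p p' q δ γ =>
      exact tensor_eq_of_slide f₁ i₁ f₂ i₂ dag st ddw p p' q δ γ _ _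
  refine ⟨Quot.lift val hval, ?_, ?_⟩
  · intro z₁ z₂ h δ γ ε
    exact tensor_eq_of_paths f₁ i₁ f₂ i₂ dag st ddw z₁ z₂ h δ γ _ ε
  · intro α μ z₁ z₂ h δ γ ε
    exact tensor_eq_of_paths f₁ i₁ f₂ i₂ dag st ddw z₁ z₂ h (α.trans δ) (γ.trans μ) _ ε
end

section
/- Let (Z₁,f₁,i₁) be a topological correspondence from Y to X and (Z₂,f₂,i₂) a topological correspondence from X to W, with X path connected, and let (Z,f,i) be their product; fix basepoints † ∈ Y, * ∈ X, ‡ ∈ W. If at least one of the maps i₂ : Z₂ → X and f₁ : Z₁ → X is a fibration, then the natural map B(f,i) → B(f₁,i₁) ⊗_{π₁(X,*)} B(f₂,i₂), sending [(δ,(z₁,z₂),γ)] to [(δ, z₁, ε⁻¹)] ⊗ [(ε, z₂, γ)] for any path ε in X from * to f₁(z₁) = i₂(z₂), is a bijection, hence an isomorphism of π₁(Y,†)-π₁(W,‡)-bisets. -/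
/-!
An element of the tensor product is represented by points `z₁`, `z₂`, outer paths `δ₁`, `γ₂`, and,
up to homotopy, the single path `κ = γ₁ # δ₂` in `X` from `f₁ z₁` to `i₂ z₂` (`tensor_mk_eq`). The
natural map produces exactly the representatives with constant `κ`. Its inverse slides `z₁` and
`z₂` along paths `q₁`, `q₂` until `κ` becomes trivial, so that the endpoints form a point of the
fibre product; the relation `Connects` records this.

The fibration hypothesis, in either variant, enters through two facts. Such `q₁`, `q₂` exist, by
lifting `κ` (`exists_prod_point`). Two outcomes are equal in `B(f,i)`: they differ by paths in `Z₁`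
and `Z₂` whose images in `X` are homotopic, and lifting the homotopy deforms them to a path in the
fibre product (`exists_compat_paths`). Invariance of `Connects` under the relations of the tensor
product (`Connects.of_rel`) is then a calculation with homotopy classes of paths.
-/

universe u

section Lifting

/-! ### Lifting along fibrations -/

/-- A path `q` in the total space of a fibration whose projection is homotopic rel endpoints to `κ`
can itself be deformed to `l # m # r⁻¹`, where `m` lies over `κ` and `l`, `r` lie in the fibres over
the endpoints. The homotopy is lifted starting from `q`; since it is rel endpoints, the two
vertical sides of the lifted square lie in fibres, so lifting relative to these sides is not
needed. -/
theorem lift_square {E B : Type u} [TopologicalSpace E] [TopologicalSpace B] (p : C(E, B))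
    (hp : IsFibration.{u} ⇑p) {b b' : E} (q : Path b b') (κ : Path (p b) (p b'))
    (h : (q.map p.continuous).Homotopic κ) :
    ∃ (c c' : E) (l : Path b c) (m : Path c c') (r : Path b' c'),
      (∀ t, p (l t) = p b) ∧ (∀ t, p (m t) = κ t) ∧ (∀ t, p (r t) = p b') ∧
      q.Homotopic ((l.trans m).trans r.symm) := by
  obtain ⟨F⟩ := h
  obtain ⟨G, hG0, hG⟩ := hp (ULift.{u} unitInterval)
    ⟨fun x => F (x.2, x.1.down), by fun_prop⟩ ⟨fun s => q s.down, by fun_prop⟩ (by intro w; simp)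
  let G' : C(unitInterval × unitInterval, E) := ⟨fun x => G (⟨x.1⟩, x.2), by fun_prop⟩
  let bot : Path ((0, 0) : unitInterval × unitInterval) (1, 0) :=
    ⟨⟨fun s => (s, 0), by fun_prop⟩, rfl, rfl⟩
  let top : Path ((0, 1) : unitInterval × unitInterval) (1, 1) :=
    ⟨⟨fun s => (s, 1), by fun_prop⟩, rfl, rfl⟩
  let left : Path ((0, 0) : unitInterval × unitInterval) (0, 1) :=
    ⟨⟨fun s => (0, s), by fun_prop⟩, rfl, rfl⟩
  let right : Path ((1, 0) : unitInterval × unitInterval) (1, 1) :=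
    ⟨⟨fun s => (1, s), by fun_prop⟩, rfl, rfl⟩
  have hb : b = G' (0, 0) := ((hG0 ⟨0⟩).trans q.source).symm
  have hb' : b' = G' (1, 0) := ((hG0 ⟨1⟩).trans q.target).symm
  have : ContractibleSpace unitInterval :=
    (convex_Icc (0 : ℝ) 1).contractibleSpace ⟨0, by simp⟩
  -- Both ways around the square are homotopic because the square is contractible.
  have key : bot.Homotopic ((left.trans top).trans right.symm) :=
    SimplyConnectedSpace.paths_homotopic _ _
  refine ⟨_, _, (left.map G'.continuous).cast hb rfl, top.map G'.continuous,
    (right.map G'.continuous).cast hb' rfl, ?_, ?_, ?_, ?_⟩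
  · intro t
    exact (hG (⟨0⟩, t)).trans (by simp)
  · intro t
    exact (hG (⟨t⟩, 1)).trans (by simp)
  · intro t
    exact (hG (⟨1⟩, t)).trans (by simp)
  · have h2 := (key.map G').pathCast hb hb'
    have e : (bot.map G'.continuous).cast hb hb' = q := by
      ext t
      exact hG0 ⟨t⟩
    rw [Path.map_trans, Path.map_trans, e] at h2
    exact h2

theorem lift_path {E B : Type u} [TopologicalSpace E] [TopologicalSpace B] (p : C(E, B))
    (hp : IsFibration.{u} ⇑p) {b : E} {y : B} (κ : Path (p b) y) :
    ∃ (c : E) (l : Path b c), ∀ t, p (l t) = κ t := by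
  obtain ⟨G, hG0, hG⟩ := hp PUnit ⟨fun x => κ x.2, by fun_prop⟩ ⟨fun _ => b, by fun_prop⟩
    (by intro w; simp)
  exact ⟨G (⟨⟩, 1), ⟨⟨fun t => G (⟨⟩, t), by fun_prop⟩, hG0 _, rfl⟩, fun t => hG (⟨⟩, t)⟩

end Lifting

/-! ### Paths in the fibre product -/

section
variable {X Z₁ Z₂ : Type u} [TopologicalSpace X] [TopologicalSpace Z₁] [TopologicalSpace Z₂]

/-- The path in the fibre product with components `q₁` and `q₂`. -/
def pairPath {f₁ : C(Z₁, X)} {i₂ : C(Z₂, X)} {a a' : Z₁} {b b' : Z₂} (q₁ : Path a a')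
    (q₂ : Path b b') (h : f₁ a = i₂ b) (h' : f₁ a' = i₂ b')
    (hq : ∀ t, f₁ (q₁ t) = i₂ (q₂ t)) :
    Path (⟨(a, b), h⟩ : ProdCorrSpace f₁ i₂) ⟨(a', b'), h'⟩ where
  toFun t := ⟨(q₁ t, q₂ t), hq t⟩
  continuous_toFun := Continuous.subtype_mk (by fun_prop) _
  source' := Subtype.ext (by simp)
  target' := Subtype.ext (by simp)

theorem homotopic_refl_trans_trans_refl {A : Type*} [TopologicalSpace A] {a a' : A}
    (q : Path a a') :
    (((Path.refl a).trans q).trans (Path.refl a').symm).Homotopic q := by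
  rw [← Path.Homotopic.Quotient.eq]
  simp

theorem compat_trans {f₁ : C(Z₁, X)} {i₂ : C(Z₂, X)} {a a' a'' : Z₁} {b b' b'' : Z₂}
    {p : Path a a'} {p' : Path a' a''} {q : Path b b'} {q' : Path b' b''}
    (h : ∀ t, f₁ (p t) = i₂ (q t)) (hpq : ∀ t, f₁ (p' t) = i₂ (q' t)) (t : unitInterval) :
    f₁ ((p.trans p') t) = i₂ ((q.trans q') t) := by
  simp only [Path.trans_apply]
  split_ifs
  · exact h _
  · exact hpq _

/-- If the images in `X` of paths `q₁` in `Z₁` and `q₂` in `Z₂` are merely homotopic rel endpoints,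
then, as soon as one of the maps is a fibration, `q₁` and `q₂` can be deformed so that their images
agree pointwise, i.e. so that they form a path in the fibre product. -/
theorem exists_compat_paths (f₁ : C(Z₁, X)) (i₂ : C(Z₂, X))
    (hfib : IsFibration.{u} ⇑i₂ ∨ IsFibration.{u} ⇑f₁) {a a' : Z₁} {b b' : Z₂}
    (h : f₁ a = i₂ b) (hab : f₁ a' = i₂ b') (q₁ : Path a a') (q₂ : Path b b')
    (hq : (q₁.map f₁.continuous).Homotopic ((q₂.map i₂.continuous).cast h hab)) :
    ∃ (p₁ : Path a a') (p₂ : Path b b'),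
      p₁.Homotopic q₁ ∧ p₂.Homotopic q₂ ∧ ∀ t, f₁ (p₁ t) = i₂ (p₂ t) := by
  rcases hfib with hfib | hfib
  · obtain ⟨c, c', l, m, r, hl, hm, hr, hh⟩ := lift_square i₂ hfib q₂
      ((q₁.map f₁.continuous).cast h.symm hab.symm) (hq.symm.pathCast h.symm hab.symm)
    exact ⟨_, _, homotopic_refl_trans_trans_refl q₁, hh.symm,
      compat_trans (compat_trans (fun t => h.trans (hl t).symm) (fun t => (hm t).symm))
        (fun t => hab.trans (hr _).symm)⟩
  · obtain ⟨c, c', l, m, r, hl, hm, hr, hh⟩ := lift_square f₁ hfib q₁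
      ((q₂.map i₂.continuous).cast h hab) hq
    exact ⟨_, _, hh.symm, homotopic_refl_trans_trans_refl q₂,
      compat_trans (compat_trans (fun t => (hl t).trans h) hm) (fun t => (hr _).trans hab)⟩

/-- Every path `κ` from `f₁ z₁` to `i₂ z₂` can be contracted to a point of the fibre product by moving
`z₁` and `z₂`; only the endpoint lying over the fibration has to move, along a lift of `κ` or `κ⁻¹`. -/
theorem exists_prod_point (f₁ : C(Z₁, X)) (i₂ : C(Z₂, X))
    (hfib : IsFibration.{u} ⇑i₂ ∨ IsFibration.{u} ⇑f₁) {z₁ : Z₁} {z₂ : Z₂}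
    (κ : Path (f₁ z₁) (i₂ z₂)) :
    ∃ (a : Z₁) (b : Z₂) (h : f₁ a = i₂ b) (q₁ : Path z₁ a) (q₂ : Path z₂ b),
      (q₁.map f₁.continuous).Homotopic ((κ.trans (q₂.map i₂.continuous)).cast rfl h) := by
  rcases hfib with hfib | hfib
  · obtain ⟨c, l, hl⟩ := lift_path i₂ hfib κ.symm
    have h : f₁ z₁ = i₂ c := by simpa using (hl 1).symm
    refine ⟨z₁, c, h, Path.refl _, l, ?_⟩
    have e : (l.map i₂.continuous).cast rfl h = κ.symm := by
      ext t
      exact hl t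
    rw [Path.cast_trans _ _ rfl rfl h, e, ← Path.Homotopic.Quotient.eq]
    change Path.Homotopic.Quotient.mk (Path.refl _) = _
    simp
  · obtain ⟨c, l, hl⟩ := lift_path f₁ hfib κ
    have h : f₁ c = i₂ z₂ := by simpa using hl 1
    refine ⟨c, z₂, h, l, Path.refl _, ?_⟩
    have e : (l.map f₁.continuous) = κ.cast rfl h := by
      ext t
      exact hl t
    rw [e]
    refine Path.Homotopic.pathCast ?_ rfl h
    rw [← Path.Homotopic.Quotient.eq]
    change _ = Path.Homotopic.Quotient.mk (κ.trans (Path.refl _))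
    simp
end

/-! ### Calculus of homotopy classes of paths -/

namespace PathClass

variable {A : Type*} [TopologicalSpace A] {x y z : A}

theorem symm_trans_cancel (p : Path.Homotopic.Quotient x y) (q : Path.Homotopic.Quotient y z) :
    p.symm.trans (p.trans q) = q := by
  rw [← Path.Homotopic.Quotient.trans_assoc]; simp

theorem trans_symm_cancel (p : Path.Homotopic.Quotient x y) (q : Path.Homotopic.Quotient x z) :
    p.trans (p.symm.trans q) = q := by
  rw [← Path.Homotopic.Quotient.trans_assoc]; simp

theorem symm_symm (p : Path.Homotopic.Quotient x y) : p.symm.symm = p := by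
  induction p using Path.Homotopic.Quotient.ind with
  | mk p => rw [← Path.Homotopic.Quotient.mk_symm, ← Path.Homotopic.Quotient.mk_symm,
      Path.symm_symm]

theorem symm_trans_rev (p : Path.Homotopic.Quotient x y) (q : Path.Homotopic.Quotient y z) :
    (p.trans q).symm = q.symm.trans p.symm := by
  induction p using Path.Homotopic.Quotient.ind with
  | mk p =>
    induction q using Path.Homotopic.Quotient.ind with
    | mk q => simp only [← Path.Homotopic.Quotient.mk_symm, ← Path.Homotopic.Quotient.mk_trans,
        Path.trans_symm]

theorem symm_trans_of_cast {s u v : A} {P : Path x u} {γ : Path x s} {δ : Path s y} {Q : Path y v}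
    (h : u = v) (hP : P.Homotopic (((γ.trans δ).trans Q).cast rfl h)) (ε : Path s u) :
    ((P.symm.trans γ).trans (δ.trans Q)).Homotopic (ε.symm.trans (ε.cast rfl h.symm)) := by
  subst h
  rw [← Path.Homotopic.Quotient.eq] at hP ⊢
  simp only [Path.Homotopic.Quotient.mk_trans, Path.Homotopic.Quotient.mk_symm,
    Path.cast_rfl_rfl, Path.Homotopic.Quotient.trans_assoc,
    Path.Homotopic.Quotient.symm_trans] at hP ⊢
  rw [← hP, Path.Homotopic.Quotient.symm_trans]

theorem symm_trans_cast {u v u' v' : A} {P : Path x u} {P' : Path x u'} {κ : Path x y}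
    {Q : Path y v} {Q' : Path y v'} (h : u = v) (h' : u' = v')
    (hP : P.Homotopic ((κ.trans Q).cast rfl h)) (hP' : P'.Homotopic ((κ.trans Q').cast rfl h')) :
    (P.symm.trans P').Homotopic ((Q.symm.trans Q').cast h h') := by
  subst h h'
  rw [← Path.Homotopic.Quotient.eq] at hP hP' ⊢
  simp only [Path.Homotopic.Quotient.mk_trans, Path.Homotopic.Quotient.mk_symm,
    Path.cast_rfl_rfl] at hP hP' ⊢
  rw [hP, hP', symm_trans_rev, Path.Homotopic.Quotient.trans_assoc, symm_trans_cancel]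

theorem trans_cast {u v w : A} {P : Path x u} {γ : Path x y} {δ : Path y z} {Q : Path z v}
    (h : u = v) (hP : P.Homotopic (((γ.trans δ).trans Q).cast rfl h)) (q : Path w x) :
    (q.trans P).Homotopic ((((q.trans γ).trans δ).trans Q).cast rfl h) := by
  subst h
  rw [← Path.Homotopic.Quotient.eq] at hP ⊢
  simp only [Path.Homotopic.Quotient.mk_trans, Path.cast_rfl_rfl,
    Path.Homotopic.Quotient.trans_assoc] at hP ⊢
  rw [hP]

theorem slide_cast {s u v u' v' : A} (h : u = v) (h' : u' = v') {P : Path u u'} {Q : Path v v'}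
    (hP : P = Q.cast h h') (ε : Path s u) :
    P.Homotopic (((ε.symm.trans (ε.cast rfl h.symm)).trans Q).cast rfl h') := by
  subst h h' hP
  rw [← Path.Homotopic.Quotient.eq]
  simp

theorem refl_cast {u : A} (h : x = u) (ε : Path y x) :
    (Path.refl x).Homotopic (((ε.symm.trans (ε.cast rfl h.symm)).trans (Path.refl u)).cast rfl h)
    := by
  subst h
  rw [← Path.Homotopic.Quotient.eq]
  simp

end PathClass

/-! ### Comparing the two bisets -/

section
variable {Y X W Z₁ Z₂ : Type u}
    [TopologicalSpace Y] [TopologicalSpace X] [TopologicalSpace W]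
    [TopologicalSpace Z₁] [TopologicalSpace Z₂]
    {f₁ : C(Z₁, X)} {i₁ : C(Z₁, Y)} {f₂ : C(Z₂, W)} {i₂ : C(Z₂, X)}
    {dag : Y} {st : X} {ddw : W}

/-- The triple `(δ, (a, b), γ)` of the product correspondence. -/
def prodTriple {a : Z₁} {b : Z₂} (h : f₁ a = i₂ b) (δ : Path dag (i₁ a)) (γ : Path (f₂ b) ddw) :
    CorrTriple (prodCorrF f₁ f₂ i₂) (prodCorrI f₁ i₁ i₂) dag ddw :=
  ⟨⟨(a, b), h⟩, δ, γ⟩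

/-- Sliding in the product correspondence along a pair of paths whose images in `X` agree only up to
homotopy. -/
theorem prod_mk_eq
    (hfib : IsFibration.{u} ⇑i₂ ∨ IsFibration.{u} ⇑f₁) {a a' : Z₁} {b b' : Z₂}
    (h : f₁ a = i₂ b) (h' : f₁ a' = i₂ b') (q₁ : Path a a') (q₂ : Path b b')
    (hq : (q₁.map f₁.continuous).Homotopic ((q₂.map i₂.continuous).cast h h'))
    (δ : Path dag (i₁ a)) (δ' : Path dag (i₁ a')) (γ : Path (f₂ b) ddw) (γ' : Path (f₂ b') ddw)
    (hδ : (δ.trans (q₁.map i₁.continuous)).Homotopic δ')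
    (hγ : ((q₂.map f₂.continuous).symm.trans γ).Homotopic γ') :
    Quot.mk (CorrRel (prodCorrF f₁ f₂ i₂) (prodCorrI f₁ i₁ i₂) dag ddw) (prodTriple h δ γ) =
      Quot.mk _ (prodTriple h' δ' γ') := by
  obtain ⟨p₁, p₂, h₁, h₂, hp⟩ := exists_compat_paths f₁ i₂ hfib h h' q₁ q₂ hq
  refine (Quot.sound (CorrRel.slide (f := prodCorrF f₁ f₂ i₂) (i := prodCorrI f₁ i₁ i₂)
    _ _ (pairPath p₁ p₂ h h' hp) δ γ)).trans
    (Quot.sound (CorrRel.homotopic _ _ _ _ _ ?_ ?_))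
  · exact ((Path.Homotopic.refl δ).hcomp (h₁.map i₁)).trans hδ
  · exact ((h₂.map f₂).symm₂.hcomp (Path.Homotopic.refl γ)).trans hγ

/-- The pair `t` of triples `(δ₁, z₁, γ₁)`, `(δ₂, z₂, γ₂)` is connected to `(δ, (a, b), γ)` if there are
paths `q₁` from `z₁` to `a` and `q₂` from `z₂` to `b` which slide `δ₁` to `δ` and `γ₂` to `γ` and for
which `f₁ ∘ q₁` is homotopic to `γ₁ # δ₂ # (i₂ ∘ q₂)`. This relation is the graph, on
representatives, of the inverse of the natural map. -/
def Connects (t : CorrTriple f₁ i₁ dag st × CorrTriple f₂ i₂ st ddw)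
    {a : Z₁} {b : Z₂} (h : f₁ a = i₂ b) (δ : Path dag (i₁ a)) (γ : Path (f₂ b) ddw) : Prop :=
  ∃ (q₁ : Path t.1.pt a) (q₂ : Path t.2.pt b),
    (t.1.del.trans (q₁.map i₁.continuous)).Homotopic δ ∧
    ((q₂.map f₂.continuous).symm.trans t.2.gam).Homotopic γ ∧
    (q₁.map f₁.continuous).Homotopic
      (((t.1.gam.trans t.2.del).trans (q₂.map i₂.continuous)).cast rfl h)

theorem exists_connects (hfib : IsFibration.{u} ⇑i₂ ∨ IsFibration.{u} ⇑f₁)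
    (t : CorrTriple f₁ i₁ dag st × CorrTriple f₂ i₂ st ddw) :
    ∃ (a : Z₁) (b : Z₂) (h : f₁ a = i₂ b) (δ : Path dag (i₁ a)) (γ : Path (f₂ b) ddw),
      Connects t h δ γ := by
  obtain ⟨a, b, h, q₁, q₂, hq⟩ := exists_prod_point f₁ i₂ hfib (t.1.gam.trans t.2.del)
  exact ⟨a, b, h, t.1.del.trans (q₁.map i₁.continuous),
    (q₂.map f₂.continuous).symm.trans t.2.gam, q₁, q₂, .refl _, .refl _, hq⟩

/-- The element of `B(f,i)` connected to a given pair is unique. -/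
theorem Connects.unique (hfib : IsFibration.{u} ⇑i₂ ∨ IsFibration.{u} ⇑f₁)
    {t : CorrTriple f₁ i₁ dag st × CorrTriple f₂ i₂ st ddw}
    {a a' : Z₁} {b b' : Z₂} {h : f₁ a = i₂ b} {δ : Path dag (i₁ a)} {γ : Path (f₂ b) ddw}
    {h' : f₁ a' = i₂ b'} {δ' : Path dag (i₁ a')} {γ' : Path (f₂ b') ddw}
    (hc : Connects t h δ γ) (hc' : Connects t h' δ' γ') :
    Quot.mk (CorrRel (prodCorrF f₁ f₂ i₂) (prodCorrI f₁ i₁ i₂) dag ddw) (prodTriple h δ γ) =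
      Quot.mk _ (prodTriple h' δ' γ') := by
  obtain ⟨q₁, q₂, hδ, hγ, hq⟩ := hc
  obtain ⟨q₁', q₂', hδ', hγ', hq'⟩ := hc'
  refine prod_mk_eq hfib h h' (q₁.symm.trans q₁') (q₂.symm.trans q₂') ?_ δ δ' γ γ' ?_ ?_
  · rw [Path.map_trans, ← Path.map_symm, Path.map_trans, ← Path.map_symm]
    exact PathClass.symm_trans_cast h h' hq hq'
  · rw [Path.map_trans, ← Path.map_symm]
    rw [← Path.Homotopic.Quotient.eq] at hδ hδ' ⊢
    rw [← hδ', Path.Homotopic.Quotient.mk_trans, ← hδ]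
    simp only [Path.Homotopic.Quotient.mk_trans, Path.Homotopic.Quotient.mk_symm,
      Path.Homotopic.Quotient.trans_assoc, PathClass.trans_symm_cancel]
  · rw [Path.map_trans, ← Path.map_symm]
    rw [← Path.Homotopic.Quotient.eq] at hγ hγ' ⊢
    rw [← hγ', Path.Homotopic.Quotient.mk_trans, ← hγ]
    simp only [Path.Homotopic.Quotient.mk_trans, Path.Homotopic.Quotient.mk_symm,
      PathClass.symm_trans_rev, PathClass.symm_symm,
      Path.Homotopic.Quotient.trans_assoc, PathClass.trans_symm_cancel]

theorem Connects.of_rel {t t' : CorrTriple f₁ i₁ dag st × CorrTriple f₂ i₂ st ddw}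
    {a : Z₁} {b : Z₂} {h : f₁ a = i₂ b} {δ : Path dag (i₁ a)} {γ : Path (f₂ b) ddw}
    (hc : Connects t h δ γ) (hr : ProdTensorRel f₁ i₁ f₂ i₂ dag st ddw t t') :
    Connects t' h δ γ := by
  obtain ⟨q₁, q₂, hδ, hγ, hq⟩ := hc
  obtain ⟨t₁, t₂⟩ := t
  obtain ⟨t₁', t₂'⟩ := t'
  rcases hr with ⟨hr, he⟩ | ⟨he, hr⟩ | ⟨g, p, δ, γ, q, δ', γ', he, he'⟩
  · dsimp only at he hr
    subst he
    cases hr with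
    | homotopic p δ δ' γ γ' h h' =>
      exact ⟨q₁, q₂, (h.symm.hcomp (.refl _)).trans hδ, hγ,
        hq.trans (((h'.hcomp (.refl _)).hcomp (.refl _)).pathCast _ _)⟩
    | slide p p' q δ γ =>
      refine ⟨q.symm.trans q₁, q₂, .trans ?_ hδ, hγ, ?_⟩
      · rw [← Path.Homotopic.Quotient.eq, Path.map_trans, ← Path.map_symm]
        simp only [Path.Homotopic.Quotient.mk_trans, Path.Homotopic.Quotient.mk_symm,
          Path.Homotopic.Quotient.trans_assoc, PathClass.trans_symm_cancel]
      · rw [Path.map_trans, ← Path.map_symm]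
        exact PathClass.trans_cast _ hq _
  · dsimp only at he hr
    subst he
    cases hr with
    | homotopic p δ δ' γ γ' h h' =>
      exact ⟨q₁, q₂, hδ, ((Path.Homotopic.refl _).hcomp h'.symm).trans hγ,
        hq.trans ((((Path.Homotopic.refl _).hcomp h).hcomp (.refl _)).pathCast _ _)⟩
    | slide p p' q δ γ =>
      refine ⟨q₁, q.symm.trans q₂, hδ, .trans ?_ hγ, hq.trans (.pathCast ?_ _ _)⟩
      · rw [← Path.Homotopic.Quotient.eq, Path.map_trans, ← Path.map_symm]
        simp only [Path.Homotopic.Quotient.mk_trans, Path.Homotopic.Quotient.mk_symm,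
          PathClass.symm_trans_rev, PathClass.symm_symm,
          Path.Homotopic.Quotient.trans_assoc, PathClass.trans_symm_cancel]
      · rw [← Path.Homotopic.Quotient.eq, Path.map_trans, ← Path.map_symm]
        simp only [Path.Homotopic.Quotient.mk_trans, Path.Homotopic.Quotient.mk_symm,
          Path.Homotopic.Quotient.trans_assoc, PathClass.trans_symm_cancel]
  · cases he
    cases he'
    refine ⟨q₁, q₂, hδ, hγ, hq.trans (.pathCast ?_ _ _)⟩
    rw [← Path.Homotopic.Quotient.eq]
    simp only [Path.Homotopic.Quotient.mk_trans, Path.Homotopic.Quotient.trans_assoc]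

/-- The class of `(δ, z₁, ε) ⊗ (η, z₂, γ)` depends on `ε` and `η` only through the homotopy class of
`ε # η`: the loop carried across the tensor sign is the reverse of the second `ε` followed by the
first. -/
theorem tensor_mk_eq {z₁ : Z₁} {z₂ : Z₂} {δ δ' : Path dag (i₁ z₁)} {γ γ' : Path (f₂ z₂) ddw}
    {ε ε' : Path (f₁ z₁) st} {η η' : Path st (i₂ z₂)}
    (hδ : δ.Homotopic δ') (hγ : γ.Homotopic γ')
    (h : (ε.trans η).Homotopic (ε'.trans η')) :
    Quot.mk (ProdTensorRel f₁ i₁ f₂ i₂ dag st ddw) (⟨z₁, δ, ε⟩, ⟨z₂, η, γ⟩) =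
      Quot.mk _ (⟨z₁, δ', ε'⟩, ⟨z₂, η', γ'⟩) := by
  have h₁ : ProdTensorRel f₁ i₁ f₂ i₂ dag st ddw (⟨z₁, δ, ε⟩, ⟨z₂, η, γ⟩)
      (⟨z₁, δ', ε'.trans (ε'.symm.trans ε)⟩, ⟨z₂, η, γ⟩) := by
    refine .inl ⟨.homotopic _ _ _ _ _ hδ ?_, rfl⟩
    rw [← Path.Homotopic.Quotient.eq]
    simp [PathClass.trans_symm_cancel]
  have h₂ : ProdTensorRel f₁ i₁ f₂ i₂ dag st ddw
      (⟨z₁, δ', ε'.trans (ε'.symm.trans ε)⟩, ⟨z₂, η, γ⟩)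
      (⟨z₁, δ', ε'⟩, ⟨z₂, (ε'.symm.trans ε).trans η, γ⟩) :=
    .inr (.inr ⟨_, _, _, _, _, _, _, rfl, rfl⟩)
  have h₃ : ProdTensorRel f₁ i₁ f₂ i₂ dag st ddw
      (⟨z₁, δ', ε'⟩, ⟨z₂, (ε'.symm.trans ε).trans η, γ⟩)
      (⟨z₁, δ', ε'⟩, ⟨z₂, η', γ'⟩) := by
    refine .inr (.inl ⟨rfl, .homotopic _ _ _ _ _ ?_ hγ⟩)
    rw [← Path.Homotopic.Quotient.eq] at h ⊢
    simp only [Path.Homotopic.Quotient.mk_trans, Path.Homotopic.Quotient.mk_symm,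
      Path.Homotopic.Quotient.trans_assoc] at h ⊢
    rw [h, PathClass.symm_trans_cancel]
  exact (Quot.sound h₁).trans ((Quot.sound h₂).trans (Quot.sound h₃))

theorem tensor_slide {z₁ a : Z₁} {z₂ b : Z₂} (q₁ : Path z₁ a) (q₂ : Path z₂ b)
    (δ : Path dag (i₁ z₁)) (γ : Path (f₂ z₂) ddw) (ε : Path (f₁ z₁) st) (η : Path st (i₂ z₂)) :
    Quot.mk (ProdTensorRel f₁ i₁ f₂ i₂ dag st ddw) (⟨z₁, δ, ε⟩, ⟨z₂, η, γ⟩) =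
      Quot.mk _ (⟨a, δ.trans (q₁.map i₁.continuous), (q₁.map f₁.continuous).symm.trans ε⟩,
        ⟨b, η.trans (q₂.map i₂.continuous), (q₂.map f₂.continuous).symm.trans γ⟩) := by
  have h₁ : ProdTensorRel f₁ i₁ f₂ i₂ dag st ddw (⟨z₁, δ, ε⟩, ⟨z₂, η, γ⟩)
      (⟨a, δ.trans (q₁.map i₁.continuous), (q₁.map f₁.continuous).symm.trans ε⟩, ⟨z₂, η, γ⟩) :=
    .inl ⟨CorrRel.slide _ _ q₁ δ ε, rfl⟩
  exact (Quot.sound h₁).trans (Quot.sound (.inr (.inl ⟨rfl, CorrRel.slide _ _ q₂ η γ⟩)))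

/-- The natural map sends an element connected to `t` to the class of `t`. -/
theorem Connects.tensor_eq
    {t : CorrTriple f₁ i₁ dag st × CorrTriple f₂ i₂ st ddw}
    {a : Z₁} {b : Z₂} {h : f₁ a = i₂ b} {δ : Path dag (i₁ a)} {γ : Path (f₂ b) ddw}
    (hc : Connects t h δ γ) (ε : Path st (f₁ a)) :
    Quot.mk (ProdTensorRel f₁ i₁ f₂ i₂ dag st ddw) (⟨a, δ, ε.symm⟩, ⟨b, ε.cast rfl h.symm, γ⟩) =
      Quot.mk _ t := by
  obtain ⟨q₁, q₂, hδ, hγ, hq⟩ := hc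
  exact ((tensor_slide q₁ q₂ _ _ _ _).trans
    (tensor_mk_eq hδ hγ (PathClass.symm_trans_of_cast h hq ε))).symm

theorem connects_self {z₁ : Z₁} {z₂ : Z₂} (h : f₁ z₁ = i₂ z₂)
    (δ : Path dag (i₁ z₁)) (γ : Path (f₂ z₂) ddw) (ε : Path st (f₁ z₁)) :
    Connects (⟨z₁, δ, ε.symm⟩, ⟨z₂, ε.cast rfl h.symm, γ⟩) h δ γ :=
  ⟨Path.refl _, Path.refl _, ⟨Path.Homotopy.transRefl δ⟩, ⟨Path.Homotopy.reflTrans γ⟩,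
    PathClass.refl_cast h ε⟩

theorem tensor_mk_indep {z₁ : Z₁} {z₂ : Z₂} (h : f₁ z₁ = i₂ z₂)
    (δ : Path dag (i₁ z₁)) (γ : Path (f₂ z₂) ddw) (ε ε' : Path st (f₁ z₁)) :
    Quot.mk (ProdTensorRel f₁ i₁ f₂ i₂ dag st ddw)
        (⟨z₁, δ, ε.symm⟩, ⟨z₂, ε.cast rfl h.symm, γ⟩) =
      Quot.mk _ (⟨z₁, δ, ε'.symm⟩, ⟨z₂, ε'.cast rfl h.symm, γ⟩) :=
  (connects_self h δ γ ε').tensor_eq ε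

/-- The natural map `B(f,i) → B(f₁,i₁) ⊗ B(f₂,i₂)`, with an arbitrary choice of the paths `ε` from
`st`; see `tensor_mk_indep` for the independence of this choice. -/
noncomputable def natMap [PathConnectedSpace X] :
    Quot (CorrRel (prodCorrF f₁ f₂ i₂) (prodCorrI f₁ i₁ i₂) dag ddw) →
      Quot (ProdTensorRel f₁ i₁ f₂ i₂ dag st ddw) :=
  Quot.lift (fun c => Quot.mk _
    (⟨c.pt.1.1, c.del, (PathConnectedSpace.somePath st (f₁ c.pt.1.1)).symm⟩,
      ⟨c.pt.1.2, (PathConnectedSpace.somePath st (f₁ c.pt.1.1)).cast rfl c.pt.2.symm, c.gam⟩))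
    (by
      rintro _ _ (⟨p, δ, δ', γ, γ', hδ, hγ⟩ | ⟨p, p', q, δ, γ⟩)
      · exact tensor_mk_eq hδ hγ (.refl _)
      · let r₁ : Path p.1.1 p'.1.1 := q.map (f := fun z : ProdCorrSpace f₁ i₂ => z.1.1)
          (continuous_fst.comp continuous_subtype_val)
        let r₂ : Path p.1.2 p'.1.2 := q.map (f := fun z : ProdCorrSpace f₁ i₂ => z.1.2)
          (continuous_snd.comp continuous_subtype_val)
        let e := PathConnectedSpace.somePath st (f₁ p.1.1)
        have hr : r₁.map f₁.continuous = (r₂.map i₂.continuous).cast p.2 p'.2 := by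
          ext t
          exact (q t).2
        have hc : Connects (f₁ := f₁) (i₁ := i₁) (f₂ := f₂) (i₂ := i₂) (dag := dag)
            (ddw := ddw) (⟨p.1.1, δ, e.symm⟩, ⟨p.1.2, e.cast rfl p.2.symm, γ⟩) p'.2
            (δ.trans (r₁.map i₁.continuous)) ((r₂.map f₂.continuous).symm.trans γ) := by
          refine ⟨r₁, r₂, .refl _, .refl _, ?_⟩
          exact PathClass.slide_cast p.2 p'.2 hr e
        exact (hc.tensor_eq _).symm)

end

/-- Let `(Z,f,i)` be the product of correspondences `(Z₁,f₁,i₁)` from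
`Y` to `X` and `(Z₂,f₂,i₂)` from `X` to `W`, with `X` path connected.  If at least one
of `i₂ : Z₂ → X`, `f₁ : Z₁ → X` is a fibration, then the natural map
`B(f,i) → B(f₁,i₁) ⊗_{π₁(X,*)} B(f₂,i₂)`,
`[(δ,(z₁,z₂),γ)] ↦ [(δ, z₁, ε⁻¹)] ⊗ [(ε, z₂, γ)]`, is a bijection, hence an
isomorphism of `π₁(Y,†)`-`π₁(W,‡)`-bisets. -/
theorem product_correspondence_biset_iso {Y X W Z₁ Z₂ : Type u}
    [TopologicalSpace Y] [TopologicalSpace X] [TopologicalSpace W]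
    [TopologicalSpace Z₁] [TopologicalSpace Z₂] [PathConnectedSpace X]
    (f₁ : C(Z₁, X)) (i₁ : C(Z₁, Y)) (f₂ : C(Z₂, W)) (i₂ : C(Z₂, X))
    (dag : Y) (st : X) (ddw : W)
    (hfib : IsFibration.{u} ⇑i₂ ∨ IsFibration.{u} ⇑f₁) :
    ∃ Θ : Quot (CorrRel (prodCorrF f₁ f₂ i₂) (prodCorrI f₁ i₁ i₂) dag ddw) ≃
        Quot (ProdTensorRel f₁ i₁ f₂ i₂ dag st ddw),
      (∀ (z₁ : Z₁) (z₂ : Z₂) (h : f₁ z₁ = i₂ z₂)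
          (δ : Path dag (i₁ z₁)) (γ : Path (f₂ z₂) ddw) (ε : Path st (f₁ z₁)),
        Θ (Quot.mk _ ⟨⟨(z₁, z₂), h⟩, δ, γ⟩) =
          Quot.mk _ (⟨z₁, δ, ε.symm⟩, ⟨z₂, ε.cast rfl h.symm, γ⟩)) ∧
      (∀ (α : Path dag dag) (μ : Path ddw ddw) (z₁ : Z₁) (z₂ : Z₂)
          (h : f₁ z₁ = i₂ z₂) (δ : Path dag (i₁ z₁)) (γ : Path (f₂ z₂) ddw)
          (ε : Path st (f₁ z₁)),
        Θ (Quot.mk _ ⟨⟨(z₁, z₂), h⟩, α.trans δ, γ.trans μ⟩) =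
          Quot.mk _ (⟨z₁, α.trans δ, ε.symm⟩,
            ⟨z₂, ε.cast rfl h.symm, γ.trans μ⟩)) := by
  -- A choice of connected triples defines the inverse map on representatives.
  choose a b h δ γ hc using
    exists_connects (i₁ := i₁) (f₂ := f₂) (dag := dag) (st := st) (ddw := ddw) hfib
  have hΘ : ∀ (z₁ : Z₁) (z₂ : Z₂) (h : f₁ z₁ = i₂ z₂)
      (δ : Path dag (i₁ z₁)) (γ : Path (f₂ z₂) ddw) (ε : Path st (f₁ z₁)),
      natMap (Quot.mk _ (prodTriple h δ γ)) =
        Quot.mk (ProdTensorRel f₁ i₁ f₂ i₂ dag st ddw)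
          (⟨z₁, δ, ε.symm⟩, ⟨z₂, ε.cast rfl h.symm, γ⟩) :=
    fun z₁ z₂ h δ γ ε => tensor_mk_indep h δ γ _ ε
  refine ⟨⟨natMap, Quot.lift (fun t => Quot.mk _ (prodTriple (h t) (δ t) (γ t))) ?_, ?_, ?_⟩,
    hΘ, fun α μ z₁ z₂ h δ γ ε => hΘ z₁ z₂ h _ _ ε⟩
  · exact fun t t' hr => ((hc t).of_rel hr).unique hfib (hc t')
  · rintro ⟨⟨⟨⟨z₁, z₂⟩, hz⟩, d, g⟩⟩
    exact (hc _).unique hfib (connects_self hz d g _)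
  · rintro ⟨t⟩
    exact (hc t).tensor_eq _
end

section
/- Let (Z,f,i) be a self-correspondence of a path-connected space X (so f, i : Z → X are continuous) with basepoint * ∈ X, and consider the π₁(X,*)-biset B(f,i) (taking † = *). Two elements b = [(α,p,γ)] and b' = [(α',p',γ')] of B(f,i) — where α is a path in X from * to i(p) and γ a path from f(p) to *, and similarly for α', γ' — are conjugate in the biset, i.e. there exists g ∈ π₁(X,*) with b' = g·b·g⁻¹, if and only if the associated homotopy pseudo-fixed points (p, γ#α) and (p', γ'#α') are conjugate, i.e. there exists a path ℓ in Z from p to p' such that (f∘ℓ)#(γ'#α')#((i∘ℓ)⁻¹) is homotopic rel endpoints to γ#α. -/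
namespace CorrAux

open Path

section Groupoid

variable {X : Type*} [TopologicalSpace X] {a b c : X}

theorem symm_trans_cancel (P : Homotopic.Quotient a b) (Q : Homotopic.Quotient b c) :
    P.symm.trans (P.trans Q) = Q := by
  rw [← Homotopic.Quotient.trans_assoc, Homotopic.Quotient.symm_trans, Homotopic.Quotient.refl_trans]

theorem trans_symm_cancel (P : Homotopic.Quotient a b) (Q : Homotopic.Quotient a c) :
    P.trans (P.symm.trans Q) = Q := by
  rw [← Homotopic.Quotient.trans_assoc, Homotopic.Quotient.trans_symm, Homotopic.Quotient.refl_trans]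

theorem symm_symm (P : Homotopic.Quotient a b) : P.symm.symm = P := by
  induction P using Homotopic.Quotient.ind with | mk p =>
  rw [← Homotopic.Quotient.mk_symm, ← Homotopic.Quotient.mk_symm, Path.symm_symm]

theorem trans_symm_rev (P : Homotopic.Quotient a b) (Q : Homotopic.Quotient b c) :
    (P.trans Q).symm = Q.symm.trans P.symm := by
  induction P using Homotopic.Quotient.ind with | mk p =>
  induction Q using Homotopic.Quotient.ind with | mk q =>
  rw [← Homotopic.Quotient.mk_trans, ← Homotopic.Quotient.mk_symm, Path.trans_symm,
    Homotopic.Quotient.mk_trans, Homotopic.Quotient.mk_symm, Homotopic.Quotient.mk_symm]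

end Groupoid

section Slide

variable {Y X Z : Type*} [TopologicalSpace Y] [TopologicalSpace X] [TopologicalSpace Z]
  {f : C(Z, X)} {i : C(Z, Y)} {dag : Y} {st : X}

/-- The closed form of the equivalence relation generated by `CorrRel`: one slide along a path
`q` in `Z`, up to homotopy. The condition on the second paths is written `γ = (f∘q)·γ'`, which is
equivalent to `γ' = (f∘q)⁻¹·γ`. -/
def CorrSlide (t t' : CorrTriple f i dag st) : Prop :=
  ∃ q : Path t.pt t'.pt,
    Homotopic.Quotient.mk t'.del =
      (Homotopic.Quotient.mk t.del).trans (Homotopic.Quotient.mk (q.map i.continuous)) ∧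
    Homotopic.Quotient.mk t.gam =
      (Homotopic.Quotient.mk (q.map f.continuous)).trans (Homotopic.Quotient.mk t'.gam)

theorem CorrSlide.of_homotopic {p : Z} {δ δ' : Path dag (i p)} {γ γ' : Path (f p) st}
    (hδ : δ.Homotopic δ') (hγ : γ.Homotopic γ') :
    CorrSlide (f := f) (i := i) ⟨p, δ, γ⟩ ⟨p, δ', γ'⟩ := by
  refine ⟨Path.refl p, ?_, ?_⟩
  · rw [show (Path.refl p).map i.continuous = Path.refl (i p) from rfl,
      Homotopic.Quotient.mk_refl, Homotopic.Quotient.trans_refl]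
    exact (Homotopic.Quotient.eq.2 hδ).symm
  · rw [show (Path.refl p).map f.continuous = Path.refl (f p) from rfl,
      Homotopic.Quotient.mk_refl, Homotopic.Quotient.refl_trans]
    exact Homotopic.Quotient.eq.2 hγ

theorem CorrSlide.symm {t t' : CorrTriple f i dag st} (h : CorrSlide t t') :
    CorrSlide t' t := by
  obtain ⟨q, h₁, h₂⟩ := h
  refine ⟨q.symm, ?_, ?_⟩
  · rw [h₁, ← Path.map_symm, Homotopic.Quotient.mk_symm, Homotopic.Quotient.trans_assoc,
      Homotopic.Quotient.trans_symm, Homotopic.Quotient.trans_refl]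
  · rw [h₂, ← Path.map_symm, Homotopic.Quotient.mk_symm, symm_trans_cancel]

theorem CorrSlide.trans {t t' t'' : CorrTriple f i dag st} (h : CorrSlide t t')
    (h' : CorrSlide t' t'') : CorrSlide t t'' := by
  obtain ⟨q, h₁, h₂⟩ := h
  obtain ⟨q', h₁', h₂'⟩ := h'
  refine ⟨q.trans q', ?_, ?_⟩
  · rw [h₁', h₁, Path.map_trans, Homotopic.Quotient.mk_trans, Homotopic.Quotient.trans_assoc]
  · rw [h₂, h₂', Path.map_trans, Homotopic.Quotient.mk_trans, Homotopic.Quotient.trans_assoc]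

theorem CorrSlide.of_corrRel {t t' : CorrTriple f i dag st} (h : CorrRel f i dag st t t') :
    CorrSlide t t' := by
  cases h with
  | homotopic p δ δ' γ γ' hδ hγ => exact .of_homotopic hδ hγ
  | slide p p' q δ γ =>
    refine ⟨q, Homotopic.Quotient.mk_trans _ _, ?_⟩
    rw [Homotopic.Quotient.mk_trans, Homotopic.Quotient.mk_symm, trans_symm_cancel]

/-- Two triples represent the same element of `B(f,i)` exactly when a single slide, up to
homotopy, takes one to the other. -/
theorem corr_mk_eq_iff {t t' : CorrTriple f i dag st} :
    Quot.mk (CorrRel f i dag st) t = Quot.mk _ t' ↔ CorrSlide t t' := by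
  constructor
  · intro h
    replace h := Quot.eqvGen_exact h
    induction h with
    | rel t t' h => exact .of_corrRel h
    | refl t => exact .of_homotopic (.refl _) (.refl _)
    | symm t t' _ ih => exact ih.symm
    | trans t t' t'' _ _ ih ih' => exact ih.trans ih'
  · obtain ⟨p, δ, γ⟩ := t
    obtain ⟨p', δ', γ'⟩ := t'
    rintro ⟨q, h₁, h₂⟩
    refine (Quot.sound (.slide p p' q δ γ)).trans (Quot.sound (.homotopic _ _ _ _ _ ?_ ?_))
    · refine Homotopic.Quotient.exact ?_
      rw [Homotopic.Quotient.mk_trans]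
      exact h₁.symm
    · refine Homotopic.Quotient.exact ?_
      rw [Homotopic.Quotient.mk_trans, Homotopic.Quotient.mk_symm]
      exact (congrArg _ h₂).trans (symm_trans_cancel _ _)

end Slide

end CorrAux

/-- Let `(Z,f,i)` be a self-correspondence of a path-connected space
`X` with basepoint `*`.  Two elements `[(α,p,γ)]` and `[(α',p',γ')]` of the
`π₁(X,*)`-biset `B(f,i)` are conjugate — i.e. `[(α',p',γ')] = g·[(α,p,γ)]·g⁻¹` for some
`g ∈ π₁(X,*)` — if and only if the associated homotopy pseudo-fixed points `(p, γ#α)`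
and `(p', γ'#α')` are conjugate, i.e. there is a path `ℓ` in `Z` from `p` to `p'` with
`(f∘ℓ)#(γ'#α')#((i∘ℓ)⁻¹)` homotopic rel endpoints to `γ#α`. -/
theorem biset_conjugacy_iff_pseudo_fixed_point_conjugacy {X Z : Type*}
    [TopologicalSpace X] [TopologicalSpace Z] [PathConnectedSpace X]
    (f : C(Z, X)) (i : C(Z, X)) (st : X)
    (p p' : Z) (α : Path st (i p)) (γ : Path (f p) st)
    (α' : Path st (i p')) (γ' : Path (f p') st) :
    (∃ g : Path st st,
      Quot.mk (CorrRel f i st st) ⟨p', α', γ'⟩ =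
        Quot.mk _ ⟨p, g.trans α, γ.trans g.symm⟩) ↔
    (∃ ℓ : Path p p',
      (((ℓ.map f.continuous).trans (γ'.trans α')).trans
          (ℓ.map i.continuous).symm).Homotopic (γ.trans α)) := by
  rw [exists_congr fun g => eq_comm.trans CorrAux.corr_mk_eq_iff]
  constructor
  · rintro ⟨g, ℓ, h₁, h₂⟩
    refine ⟨ℓ, Path.Homotopic.Quotient.exact ?_⟩
    simp only [Path.Homotopic.Quotient.mk_trans, Path.Homotopic.Quotient.mk_symm] at h₁ h₂ ⊢
    -- Regroup `(f∘ℓ)·(γ'·α')` as `((f∘ℓ)·γ')·α'` and substitute `γ·g⁻¹` for the first factor.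
    rw [← Path.Homotopic.Quotient.trans_assoc, ← h₂, h₁]
    simp only [Path.Homotopic.Quotient.trans_assoc, Path.Homotopic.Quotient.trans_symm,
      Path.Homotopic.Quotient.trans_refl, CorrAux.symm_trans_cancel]
  · rintro ⟨ℓ, h⟩
    refine ⟨α'.trans ((ℓ.map i.continuous).symm.trans α.symm), ℓ, ?_, ?_⟩
    · simp only [Path.Homotopic.Quotient.mk_trans, Path.Homotopic.Quotient.mk_symm,
        Path.Homotopic.Quotient.trans_assoc,
        Path.Homotopic.Quotient.symm_trans, Path.Homotopic.Quotient.trans_refl]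
    · have hcl := Path.Homotopic.Quotient.eq.2 h
      simp only [Path.Homotopic.Quotient.mk_trans, Path.Homotopic.Quotient.mk_symm,
        CorrAux.trans_symm_rev, CorrAux.symm_symm] at hcl ⊢
      -- Here `g⁻¹ = α·(i∘ℓ)·α'⁻¹`, so `γ·g⁻¹` contains the factor `γ·α`.
      rw [← Path.Homotopic.Quotient.trans_assoc, ← Path.Homotopic.Quotient.trans_assoc, ← hcl]
      simp only [Path.Homotopic.Quotient.trans_assoc, CorrAux.symm_trans_cancel,
        Path.Homotopic.Quotient.trans_symm, Path.Homotopic.Quotient.trans_refl]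
end
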